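/- Let u and v be permutations whose Schubert polynomials lie in ℤ[x_1,…,x_n], and define coefficients c_{u,v}^a (for weak compositions a of length n) by the expansion 𝔖_u · 𝔖_v = Σ_a c_{u,v}^a 𝔉_a in the fundamental slide basis. Then c_{u,v}^a = Σ_{(P,Q) ∈ QPD(u) × QPD(v)} [a | wt(P) ⧢ wt(Q)], where [a | wt(P) ⧢ wt(Q)] is the multiplicity of a in the slide product of the weights. -/

import Mathlib

/-!
A Schubert polynomial is a sum over reduced pipe dreams, and a pipe dream is the same thing as a
reduced word together with a compatible sequence of rows. Compatible sequences of a fixed word (with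
bounds on the entries) are closed under entrywise maxima, so if there are any there is a greatest
one, `f`; the compatible sequences are then exactly the weakly increasing sequences below `f` that
are strictly increasing wherever `f` is, and their generating function is the fundamental slide
polynomial of the content of `f`. A pipe dream is quasi-Yamanouchi exactly when no cross can move up
along its antidiagonal, that is, when its rows are the greatest ones for its reading word. Hence a
Schubert polynomial is the sum of the slide polynomials of its quasi-Yamanouchi pipe dreams.

Slide polynomials multiply in the same way. The slide polynomial of `a` is the generating function
of the compatible sequences of a weakly decreasing word, and merging two compatible sequences,
sorted by value and then by letter, gives a compatible sequence of a shuffle of the two words. The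
greatest compatible sequence of a shuffle `C` is constant on the runs of `C`, and its content is the
bump of `C`. Since slide polynomials are linearly independent, by triangularity with respect to
dominance, coefficients can be compared.
-/

open scoped Classical

namespace SlidePaper

/-- Sum of the first `i` entries of a weak composition of length `n`. -/
def psum {n : ℕ} (a : Fin n → ℕ) (i : ℕ) : ℕ :=
  ∑ j ∈ Finset.univ.filter (fun j : Fin n => (j : ℕ) < i), a j

/-- `b` dominates `a`: all partial sums of `b` are at least those of `a`. -/
def Dominates {n : ℕ} (b a : Fin n → ℕ) : Prop :=
  ∀ i : Fin (n + 1), psum a i ≤ psum b i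

/-- The flattening of a weak composition: the list of its nonzero entries in order. -/
def flat {n : ℕ} (a : Fin n → ℕ) : List ℕ :=
  (List.ofFn a).filter (fun x => x ≠ 0)

/-- `β` refines `α`: `β` splits into consecutive blocks with sums `α₁, α₂, …`. -/
def Refines (β α : List ℕ) : Prop :=
  ∃ L : List (List ℕ), L.flatten = β ∧ L.map List.sum = α

/-- All weak compositions of length `n` with entries at most `k`. -/
def wcFinset (n k : ℕ) : Finset (Fin n → ℕ) :=
  Fintype.piFinset fun _ => Finset.range (k + 1)

/-- The monomial slide polynomial `𝔐_a`. -/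
noncomputable def slideM {n : ℕ} (a : Fin n → ℕ) : MvPolynomial (Fin n) ℤ :=
  ∑ b ∈ (wcFinset n (∑ i, a i)).filter (fun b => Dominates b a ∧ flat b = flat a),
    MvPolynomial.monomial (Finsupp.equivFunOnFinite.symm b) 1

/-- The fundamental slide polynomial `𝔉_a`. -/
noncomputable def slideF {n : ℕ} (a : Fin n → ℕ) : MvPolynomial (Fin n) ℤ :=
  ∑ b ∈ (wcFinset n (∑ i, a i)).filter (fun b => Dominates b a ∧ Refines (flat b) (flat a)),
    MvPolynomial.monomial (Finsupp.equivFunOnFinite.symm b) 1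

/-- A weak composition is quasi-flat if its nonzero entries occupy consecutive positions. -/
def QuasiFlat {n : ℕ} (a : Fin n → ℕ) : Prop :=
  ∀ i j l : Fin n, i ≤ j → j ≤ l → a i ≠ 0 → a l ≠ 0 → a j ≠ 0

/-- `b` strongly dominates `a`. -/
def StronglyDominates {n : ℕ} (b a : Fin n → ℕ) : Prop :=
  Dominates b a ∧ ∀ c : Fin n → ℕ, Dominates c a → flat c = flat b → Dominates c b

/-- The exponent vector placing the parts of `α` at the positions `i`. -/
noncomputable def placeExp {n : ℕ} (α : List ℕ) (i : Fin α.length → Fin n) : Fin n →₀ ℕ :=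
  ∑ t : Fin α.length, Finsupp.single (i t) (α.get t)

/-- `f` is quasisymmetric in the variables `x_1, …, x_k` (0-indexed: `x_0, …, x_{k-1}`). -/
def IsQuasisymmetricIn {n : ℕ} (k : ℕ) (f : MvPolynomial (Fin n) ℤ) : Prop :=
  ∀ α : List ℕ, (∀ x ∈ α, 0 < x) →
    ∀ i j : Fin α.length → Fin n, StrictMono i → StrictMono j →
      (∀ t, (i t : ℕ) < k) → (∀ t, (j t : ℕ) < k) →
      MvPolynomial.coeff (placeExp α i) f = MvPolynomial.coeff (placeExp α j) f

/-- The monomial quasisymmetric polynomial `M_α(x_1, …, x_k)` inside `ℤ[x_1, …, x_n]`. -/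
noncomputable def Mqs (n k : ℕ) (α : List ℕ) : MvPolynomial (Fin n) ℤ :=
  ∑ i ∈ (Finset.univ : Finset (Fin α.length → Fin n)).filter
      (fun i : Fin α.length → Fin n => StrictMono i ∧ ∀ t, (i t : ℕ) < k),
    ∏ t : Fin α.length, (MvPolynomial.X (i t) : MvPolynomial (Fin n) ℤ) ^ α.get t

/-- The fundamental quasisymmetric polynomial `F_α(x_1, …, x_k)` inside `ℤ[x_1, …, x_n]`. -/
noncomputable def Fqs (n k : ℕ) (α : List ℕ) : MvPolynomial (Fin n) ℤ :=
  ∑ c ∈ (Finset.univ : Finset (Composition α.sum)).filter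
      (fun c => Refines c.blocks α ∧ c.blocks.length ≤ k),
    Mqs n k c.blocks

/-- Place the weak composition `a` (of length `N`) at offset `k` inside length `M`. -/
def shiftComp {N : ℕ} (k M : ℕ) (a : Fin N → ℕ) : Fin M → ℕ :=
  fun i => if h : k ≤ (i : ℕ) ∧ (i : ℕ) - k < N then a ⟨(i : ℕ) - k, h.2⟩ else 0

/-- Spread the values `g` to positions `ι` inside a weak composition of length `n`. -/
def spread {l n : ℕ} (ι : Fin l → Fin n) (g : Fin l → ℕ) : Fin n → ℕ :=
  fun i => ∑ k, if ι k = i then g k else 0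

/-- The monomial quasisymmetric function `M_α` in infinitely many variables. -/
noncomputable def MqsFun (α : List ℕ) : MvPowerSeries ℕ ℤ :=
  fun d => if ∃ i : Fin α.length → ℕ, StrictMono i ∧
      d = ∑ t : Fin α.length, Finsupp.single (i t) (α.get t) then 1 else 0

/-- The fundamental quasisymmetric function `F_α` in infinitely many variables. -/
noncomputable def FqsFun (α : List ℕ) : MvPowerSeries ℕ ℤ :=
  ∑ c ∈ (Finset.univ : Finset (Composition α.sum)).filter (fun c => Refines c.blocks α),
    MqsFun c.blocks

/-- The cells of the Young diagram of `lam` (French notation): row `r` (from the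
bottom, 0-indexed) has `lam.get r` cells. -/
abbrev Cells (lam : List ℕ) := Σ r : Fin lam.length, Fin (lam.get r)

/-- A filling of `lam` with entries in `{1, …, n}` (encoded as `Fin n`) is a semistandard
Young tableau: rows weakly increase left to right, columns strictly increase bottom to top. -/
def IsSSYT {n : ℕ} {lam : List ℕ} (T : Cells lam → Fin n) : Prop :=
  (∀ (r : Fin lam.length) (c c' : Fin (lam.get r)), c ≤ c' → T ⟨r, c⟩ ≤ T ⟨r, c'⟩) ∧
  (∀ (r r' : Fin lam.length) (c' : Fin (lam.get r')) (h : (c' : ℕ) < lam.get r),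
      (r : ℕ) < (r' : ℕ) → T ⟨r, ⟨c', h⟩⟩ < T ⟨r', c'⟩)

/-- The weight of a filling: the `v`-th entry counts the occurrences of the value `v`. -/
def wtT {n : ℕ} {lam : List ℕ} (T : Cells lam → Fin n) : Fin n → ℕ :=
  fun v => (Finset.univ.filter (fun x : Cells lam => T x = v)).card

/-- A filling is quasi-Yamanouchi if for every value `v > 1`, the leftmost occurrence of `v`
lies weakly left of some occurrence of `v - 1`. -/
def IsQY {n : ℕ} {lam : List ℕ} (T : Cells lam → Fin n) : Prop :=
  ∀ (v : Fin n) (x : Cells lam), T x = v → 0 < (v : ℕ) →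
    (∀ y : Cells lam, T y = v → (x.2 : ℕ) ≤ (y.2 : ℕ)) →
    ∃ z : Cells lam, (T z : ℕ) + 1 = (v : ℕ) ∧ (x.2 : ℕ) ≤ (z.2 : ℕ)

/-- The Schur polynomial `s_lam(x_1, …, x_n)` as the generating function of
semistandard Young tableaux. -/
noncomputable def schurPoly (n : ℕ) (lam : List ℕ) : MvPolynomial (Fin n) ℤ :=
  ∑ T ∈ (Finset.univ : Finset (Cells lam → Fin n)).filter (fun T => IsSSYT T),
    MvPolynomial.monomial (Finsupp.equivFunOnFinite.symm (wtT T)) 1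

/-- One destandardization step on fillings: for some value `v` occurring in `T` whose
leftmost occurrence is strictly right of every occurrence of `v - 1`, every `v` is
decremented to `v - 1`. -/
def TabStep {n : ℕ} {lam : List ℕ} (T T' : Cells lam → Fin n) : Prop :=
  ∃ v : Fin n, 0 < (v : ℕ) ∧ (∃ x, T x = v) ∧
    (∀ x y : Cells lam, T x = v → (T y : ℕ) + 1 = (v : ℕ) → (y.2 : ℕ) < (x.2 : ℕ)) ∧
    ∀ x : Cells lam, (T' x : ℕ) = if T x = v then (v : ℕ) - 1 else (T x : ℕ)

/-- The reading word of a set of crosses: rows are read from top to bottom, each row from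
left to right, the cross in (0-indexed) row `i` and column `j` recording the letter `i + j`
(representing the simple transposition swapping `i + j` and `i + j + 1` of `{0, 1, 2, …}`). -/
def readWord (P : Finset (ℕ × ℕ)) : List ℕ :=
  ((List.range (P.sup Prod.fst + 1)).reverse).flatMap
    (fun i => ((List.range (P.sup Prod.snd + 1)).filter (fun j => decide ((i, j) ∈ P))).map
      (fun j => i + j))

/-- The permutation `s_{i_ℓ} ⋯ s_{i_1}` associated to the word `(i_1, …, i_ℓ)`,
where `s_k` swaps `k` and `k + 1`. -/
def wordPerm (l : List ℕ) : Equiv.Perm ℕ :=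
  ((l.map (fun k => Equiv.swap k (k + 1))).reverse).prod

/-- A word is reduced if no shorter word has the same product. -/
def IsReducedWord (l : List ℕ) : Prop :=
  ∀ l' : List ℕ, wordPerm l' = wordPerm l → l.length ≤ l'.length

/-- `P` is a reduced pipe dream of shape `w`: the pipes trace out `w` and no two pipes
cross more than once, equivalently the reading word of `P` is a reduced word for `w`. -/
def IsPD (w : Equiv.Perm ℕ) (P : Finset (ℕ × ℕ)) : Prop :=
  wordPerm (readWord P) = w ∧ IsReducedWord (readWord P)

/-- `P` is a quasi-Yamanouchi pipe dream of shape `w`: for every row, the westernmost cross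
is in the first column or lies weakly west of some cross in the row above. -/
def IsQPD (w : Equiv.Perm ℕ) (P : Finset (ℕ × ℕ)) : Prop :=
  IsPD w P ∧ ∀ i j : ℕ, (i, j) ∈ P → (∀ j', (i, j') ∈ P → j ≤ j') →
    (j = 0 ∨ ∃ j', (i + 1, j') ∈ P ∧ j ≤ j')

/-- One destandardization step on pipe dreams: a row with no cross in the first column,
all of whose crosses lie strictly east of every cross in the row above, has all its
crosses moved one step northwest. -/
def PDStep (P P' : Finset (ℕ × ℕ)) : Prop :=
  ∃ r : ℕ, (∃ j, (r, j) ∈ P) ∧ (r, 0) ∉ P ∧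
    (∀ j j', (r, j) ∈ P → (r + 1, j') ∈ P → j' < j) ∧
    P' = P.filter (fun p => p.1 ≠ r) ∪
      (P.filter (fun p => p.1 = r)).image (fun p => (r + 1, p.2 - 1))

/-- The number of crosses of `P` in (0-indexed) row `i`. -/
def rowWt (P : Finset (ℕ × ℕ)) (i : ℕ) : ℕ := (P.filter (fun p => p.1 = i)).card

/-- The weight of a pipe dream, as a weak composition of length `n`. -/
def wtFin (n : ℕ) (P : Finset (ℕ × ℕ)) : Fin n → ℕ := fun i => rowWt P (i : ℕ)

/-- The flattened weight of a pipe dream: the list of nonzero row counts, bottom row first. -/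
def flatWt (P : Finset (ℕ × ℕ)) : List ℕ :=
  ((List.range (P.sup Prod.fst + 1)).map (rowWt P)).filter (fun x => x ≠ 0)

/-- The Schubert polynomial of `w` in the variables `x_1, …, x_n`, as the generating
function of reduced pipe dreams of shape `w`. -/
noncomputable def SchubertPoly (n : ℕ) (w : Equiv.Perm ℕ) : MvPolynomial (Fin n) ℤ :=
  ∑ᶠ P ∈ {P : Finset (ℕ × ℕ) | IsPD w P},
    MvPolynomial.monomial (Finsupp.equivFunOnFinite.symm (wtFin n P)) 1

/-- The Lehmer code of `w` (0-indexed): `lehmer w i` counts `j > i` with `w j < w i`. -/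
noncomputable def lehmer (w : Equiv.Perm ℕ) (i : ℕ) : ℕ :=
  Set.ncard {j : ℕ | i < j ∧ w j < w i}

/-- The Lehmer code of `w` as a weak composition of length `n`. -/
noncomputable def lehmerFin (n : ℕ) (w : Equiv.Perm ℕ) : Fin n → ℕ :=
  fun i => lehmer w (i : ℕ)

/-- The number of inversions of `w`. -/
noncomputable def invCount (w : Equiv.Perm ℕ) : ℕ :=
  Set.ncard {p : ℕ × ℕ | p.1 < p.2 ∧ w p.2 < w p.1}

/-- The largest entry of the Lehmer code of `w`. -/
noncomputable def maxLehmer (w : Equiv.Perm ℕ) : ℕ :=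
  sSup (Set.range (lehmer w))

/-- The (0-indexed) position of the first descent of `w`. -/
noncomputable def firstDescent (w : Equiv.Perm ℕ) : ℕ :=
  sInf {i : ℕ | w (i + 1) < w i}

/-- `δ(w) = 1` if every position attaining `max(L(w))` is at or before the first descent,
and `δ(w) = 0` otherwise. -/
noncomputable def delta (w : Equiv.Perm ℕ) : ℤ :=
  if ∀ i : ℕ, lehmer w i = maxLehmer w → i ≤ firstDescent w then 1 else 0

/-- `η(w) = inv(w) − max(L(w)) + δ(w) − min{i : w_i > w_{i+1}}`. -/
noncomputable def eta (w : Equiv.Perm ℕ) : ℤ :=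
  (invCount w : ℤ) - (maxLehmer w : ℤ) + delta w - ((firstDescent w : ℤ) + 1)

/-- The decomposition of a list into maximal strictly increasing runs. -/
def runsStrict : List ℕ → List (List ℕ)
  | [] => []
  | x :: rest =>
    match runsStrict rest, rest with
    | r :: rs, y :: _ => if x < y then (x :: r) :: rs else [x] :: r :: rs
    | _, _ => [[x]]

/-- The descent composition of a word: lengths of its maximal increasing runs, a new run
beginning whenever a letter is followed by a weakly smaller letter. -/
def desStrict (l : List ℕ) : List ℕ := (runsStrict l).map List.length

/-- The decomposition of a list into maximal weakly increasing runs. -/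
def runsWeak : List ℕ → List (List ℕ)
  | [] => []
  | x :: rest =>
    match runsWeak rest, rest with
    | r :: rs, y :: _ => if x ≤ y then (x :: r) :: rs else [x] :: r :: rs
    | _, _ => [[x]]

/-- The descent composition of a word: the lengths of its maximal weakly increasing runs. -/
def desComp (l : List ℕ) : List ℕ := (runsWeak l).map List.length

/-- The permutation `1^m × w`, fixing `0, …, m-1` and acting by `w` shifted by `m` above. -/
def shiftPerm (m : ℕ) (w : Equiv.Perm ℕ) : Equiv.Perm ℕ where
  toFun i := if i < m then i else w (i - m) + m
  invFun i := if i < m then i else w.symm (i - m) + m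
  left_inv i := by
    dsimp only
    by_cases h : i < m
    · simp [h]
    · have h2 : ¬ (w (i - m) + m < m) := by omega
      rw [if_neg h, if_neg h2, Nat.add_sub_cancel, Equiv.symm_apply_apply]
      omega
  right_inv i := by
    dsimp only
    by_cases h : i < m
    · simp [h]
    · have h2 : ¬ (w.symm (i - m) + m < m) := by omega
      rw [if_neg h, if_neg h2, Nat.add_sub_cancel, Equiv.apply_symm_apply]
      omega

/-- The quasi-shuffle product of two (strong) compositions, as a multiset of compositions. -/
def qShuffle : List ℕ → List ℕ → Multiset (List ℕ)
  | [], β => {β}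
  | α, [] => {α}
  | a :: α, b :: β =>
      ((qShuffle α (b :: β)).map (a :: ·)) + ((qShuffle (a :: α) β).map (b :: ·)) +
        ((qShuffle α β).map ((a + b) :: ·))
termination_by α β => α.length + β.length
decreasing_by all_goals (simp only [List.length_cons]; omega)

def shuffles : List ℕ → List ℕ → Multiset (List ℕ)
  | [], B => {B}
  | A, [] => {A}
  | x :: A, y :: B =>
      ((shuffles A (y :: B)).map (x :: ·)) + ((shuffles (x :: A) B).map (y :: ·))
termination_by A B => A.length + B.length
decreasing_by all_goals (simp only [List.length_cons]; omega)

/-- The word `(2n-1)^{a_1} (2n-3)^{a_2} ⋯ 1^{a_n}` associated to a weak composition `a`. -/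
def wordA {n : ℕ} (a : Fin n → ℕ) : List ℕ :=
  (List.ofFn (fun i : Fin n => List.replicate (a i) (2 * n - 2 * (i : ℕ) - 1))).flatten

/-- The word `(2n)^{b_1} (2n-2)^{b_2} ⋯ 2^{b_n}` associated to a weak composition `b`. -/
def wordB {n : ℕ} (b : Fin n → ℕ) : List ℕ :=
  (List.ofFn (fun i : Fin n => List.replicate (b i) (2 * n - 2 * (i : ℕ)))).flatten

/-- A list (padded with trailing zeros) dominates a weak composition of length `n`. -/
def DominatesList {n : ℕ} (l : List ℕ) (a : Fin n → ℕ) : Prop :=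
  ∀ i : Fin (n + 1), psum a (i : ℕ) ≤ ((l.take (i : ℕ)).sum)

/-- The number of letters of the `A`-word (the odd letters) in the `k`-th weakly
increasing run of `C`. -/
def runCountA (C : List ℕ) (k : Fin (runsWeak C).length) : ℕ :=
  (((runsWeak C).get k).filter (fun z => z % 2 = 1)).length

/-- The number of letters of the `B`-word (the even letters) in the `k`-th weakly
increasing run of `C`. -/
def runCountB (C : List ℕ) (k : Fin (runsWeak C).length) : ℕ :=
  (((runsWeak C).get k).filter (fun z => z % 2 = 0)).length

/-- The length of the `k`-th weakly increasing run of `C`. -/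
def runLen (C : List ℕ) (k : Fin (runsWeak C).length) : ℕ :=
  ((runsWeak C).get k).length

/-- `c = bump_{(a,b)}(C)`: the unique weak composition of length `n` obtained by inserting
zero parts into `Des(C)` so that the correspondingly placed `Des_A` and `Des_B` dominate
`a` and `b`, minimal in dominance order among all such insertions. -/
def IsBumpS {n : ℕ} (a b : Fin n → ℕ) (C : List ℕ) (c : Fin n → ℕ) : Prop :=
  ∃ ι : Fin (runsWeak C).length → Fin n, StrictMono ι ∧
    c = spread ι (runLen C) ∧
    Dominates (spread ι (runCountA C)) a ∧ Dominates (spread ι (runCountB C)) b ∧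
    ∀ ι' : Fin (runsWeak C).length → Fin n, StrictMono ι' →
      Dominates (spread ι' (runCountA C)) a → Dominates (spread ι' (runCountB C)) b →
      Dominates (spread ι' (runLen C)) c

/-- The multiplicity `[c ∣ a ⧢ b]` of `c` in the slide product of `a` and `b`: the number of
shuffles `C` of the words of `a` and `b` lying in the shuffle set `SS(a,b)` with
`bump_{(a,b)}(C) = c`. -/
noncomputable def slideMult {n : ℕ} (a b c : Fin n → ℕ) : ℕ :=
  Multiset.card ((shuffles (wordA a) (wordB b)).filter
    (fun C => DominatesList ((runsWeak C).map
        (fun r => (r.filter (fun z => z % 2 = 1)).length)) a ∧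
      DominatesList ((runsWeak C).map (fun r => (r.filter (fun z => z % 2 = 0)).length)) b ∧
      IsBumpS a b C c))

/-- Membership in the quasi-shuffle set `QSS(a,b)`: a pair `(γ_a, γ_b)` of weak compositions
of a common length at most `n` with `γ_a ≥ a`, `flat(γ_a) = flat(a)`, `γ_b ≥ b`,
`flat(γ_b) = flat(b)` (after padding with trailing zeros), and all entries of
`γ_a + γ_b` positive. -/
def InQSS {n : ℕ} (a b : Fin n → ℕ) (x : (l : ℕ) × (Fin l → ℕ) × (Fin l → ℕ)) : Prop :=
  x.1 ≤ n ∧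
  Dominates (shiftComp 0 n x.2.1) a ∧ flat x.2.1 = flat a ∧
  Dominates (shiftComp 0 n x.2.2) b ∧ flat x.2.2 = flat b ∧
  ∀ k : Fin x.1, 0 < x.2.1 k + x.2.2 k

/-- `c = bump_{(a,b)}(γ_a, γ_b)`: the unique weak composition `c` of length `n` with
`flat(c) = γ_a + γ_b` whose decomposition `c = c_a + c_b` satisfies `c_a ≥ a` and
`c_b ≥ b`, minimal in dominance order among all such compositions. -/
def IsBumpQ {n : ℕ} (a b : Fin n → ℕ) (x : (l : ℕ) × (Fin l → ℕ) × (Fin l → ℕ))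
    (c : Fin n → ℕ) : Prop :=
  ∃ ι : Fin x.1 → Fin n, StrictMono ι ∧
    c = spread ι (fun k => x.2.1 k + x.2.2 k) ∧
    Dominates (spread ι x.2.1) a ∧ Dominates (spread ι x.2.2) b ∧
    ∀ ι' : Fin x.1 → Fin n, StrictMono ι' →
      Dominates (spread ι' x.2.1) a → Dominates (spread ι' x.2.2) b →
      Dominates (spread ι' (fun k => x.2.1 k + x.2.2 k)) c

/-- The multiplicity `[c ∣ a ⧻ b]` of `c` in the quasi-slide product of `a` and `b`: the
number of pairs in the quasi-shuffle set `QSS(a,b)` whose bump is `c`. -/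
noncomputable def qsMult {n : ℕ} (a b c : Fin n → ℕ) : ℕ :=
  Nat.card {x : (l : ℕ) × (Fin l → ℕ) × (Fin l → ℕ) // InQSS a b x ∧ IsBumpQ a b x c}

/-- The Stanley symmetric function `S_w`. -/
noncomputable def StanleySym (w : Equiv.Perm ℕ) : MvPowerSeries ℕ ℤ :=
  ∑ᶠ l ∈ {l : List ℕ | wordPerm l = w ∧ IsReducedWord l}, FqsFun (desStrict l)

/-! ### Partial sums and refinement -/

section PartialSums

variable {n : ℕ} {a b : Fin n → ℕ}

theorem psum_zero (a : Fin n → ℕ) : psum a 0 = 0 := by simp [psum]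

theorem psum_eq_sum_take (a : Fin n → ℕ) (j : ℕ) : psum a j = ((List.ofFn a).take j).sum := by
  rw [psum, List.sum_take_ofFn]

theorem psum_succ (a : Fin n → ℕ) (j : Fin n) : psum a (j + 1) = psum a j + a j := by
  rw [psum_eq_sum_take, psum_eq_sum_take, List.sum_take_succ _ _ (by simp)]
  simp

theorem psum_length (a : Fin n → ℕ) : psum a n = ∑ j, a j := by
  rw [psum, Finset.filter_true_of_mem fun j _ => j.isLt]

theorem psum_mono (a : Fin n → ℕ) : Monotone (psum a) := fun i j hij => by
  refine Finset.sum_le_sum_of_subset fun k => ?_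
  simpa using fun hk => hk.trans_le hij

theorem psum_ext (h : ∀ j ≤ n, psum a j = psum b j) : a = b := by
  funext j
  have hsucc := h (j + 1) j.isLt
  rwa [psum_succ, psum_succ, h j j.isLt.le, Nat.add_left_cancel_iff] at hsucc

theorem Dominates.antisymm (hab : Dominates a b) (hba : Dominates b a) : a = b :=
  psum_ext fun j hj => le_antisymm (hba ⟨j, by omega⟩) (hab ⟨j, by omega⟩)

theorem mem_wcFinset_sum (a : Fin n → ℕ) : a ∈ wcFinset n (∑ i, a i) :=
  Fintype.mem_piFinset.mpr fun j => Finset.mem_range_succ_iff.mpr <|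
    Finset.single_le_sum (fun _ _ => Nat.zero_le _) (Finset.mem_univ j)

theorem Refines.sum_eq {β α : List ℕ} (h : Refines β α) : β.sum = α.sum := by
  obtain ⟨L, rfl, rfl⟩ := h
  rw [List.sum_flatten]

theorem refines_cons_iff {β α : List ℕ} {x : ℕ} :
    Refines β (x :: α) ↔ ∃ q β', q ++ β' = β ∧ q.sum = x ∧ Refines β' α := by
  constructor
  · rintro ⟨L, rfl, hL⟩
    obtain ⟨q, L, rfl, hq, rfl⟩ := List.map_eq_cons_iff.mp hL
    exact ⟨q, L.flatten, rfl, hq, L, rfl, rfl⟩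
  · rintro ⟨q, _, rfl, hq, L, rfl, rfl⟩
    exact ⟨q :: L, rfl, by rw [List.map_cons, hq]⟩

theorem Refines.exists_prefix_sum_eq {β α p : List ℕ} (h : Refines β α) (hp : p <+: α) :
    ∃ q, q <+: β ∧ q.sum = p.sum := by
  induction p generalizing β α with
  | nil => exact ⟨[], List.nil_prefix, rfl⟩
  | cons x p ih =>
    obtain ⟨t, rfl⟩ := hp
    obtain ⟨q, β', rfl, rfl, hβ'⟩ := refines_cons_iff.mp h
    obtain ⟨r, hr, hsum⟩ := ih hβ' (List.prefix_append p t)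
    exact ⟨q ++ r, (List.prefix_append_right_inj q).mpr hr, by simp [hsum]⟩

theorem refines_of_prefix_sums {β α : List ℕ} (hβ : ∀ x ∈ β, x ≠ 0) (hsum : β.sum = α.sum)
    (h : ∀ p, p <+: α → ∃ q, q <+: β ∧ q.sum = p.sum) : Refines β α := by
  induction α generalizing β with
  | nil =>
    have hnil : β = [] := List.eq_nil_iff_forall_not_mem.mpr fun x hx =>
      hβ x hx (List.sum_eq_zero_iff.mp hsum x hx)
    exact ⟨[], hnil.symm, rfl⟩
  | cons x α ih =>
    obtain ⟨q, ⟨β', rfl⟩, hq⟩ := h [x] ⟨α, rfl⟩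
    rw [List.sum_singleton] at hq
    rw [List.sum_append, List.sum_cons] at hsum
    refine refines_cons_iff.mpr ⟨q, β', rfl, hq,
      ih (fun y hy => hβ y (List.mem_append_right q hy)) (by omega) fun p hp => ?_⟩
    obtain ⟨s, hs, hsp⟩ := h (x :: p) (List.cons_prefix_cons.mpr ⟨rfl, hp⟩)
    rw [List.sum_cons] at hsp
    rcases List.prefix_or_prefix_of_prefix hs (List.prefix_append q β') with ⟨t, rfl⟩ | ⟨r, rfl⟩
    · rw [List.sum_append] at hq
      exact ⟨[], List.nil_prefix, by rw [List.sum_nil]; omega⟩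
    · rw [List.sum_append] at hsp
      exact ⟨r, (List.prefix_append_right_inj q).mp hs, by omega⟩

theorem sum_filter_ne_zero (l : List ℕ) : (l.filter (fun x => x ≠ 0)).sum = l.sum := by
  induction l with
  | nil => rfl
  | cons x l ih => by_cases hx : x = 0 <;> simp_all

theorem sum_flat (a : Fin n → ℕ) : (flat a).sum = psum a n := by
  rw [flat, sum_filter_ne_zero, List.sum_ofFn, psum_length]

theorem exists_prefix_flat_iff (a : Fin n → ℕ) (s : ℕ) :
    (∃ p, p <+: flat a ∧ p.sum = s) ↔ ∃ j ≤ n, psum a j = s := by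
  constructor
  · rintro ⟨p, ⟨t, ht⟩, rfl⟩
    obtain ⟨l₁, l₂, h, rfl, -⟩ := List.filter_eq_append_iff.mp ht.symm
    have hlen : n = l₁.length + l₂.length := by simpa using congrArg List.length h
    exact ⟨l₁.length, by omega, by rw [sum_filter_ne_zero, psum_eq_sum_take, h, List.take_left]⟩
  · rintro ⟨j, -, rfl⟩
    exact ⟨((List.ofFn a).take j).filter (fun x => x ≠ 0), (List.take_prefix _ _).filter _, by
      rw [sum_filter_ne_zero, psum_eq_sum_take]⟩

theorem refines_flat_iff :
    Refines (flat b) (flat a) ↔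
      psum b n = psum a n ∧ ∀ j ≤ n, ∃ k ≤ n, psum b k = psum a j := by
  constructor
  · refine fun h => ⟨by simpa only [sum_flat] using h.sum_eq, fun j hj => ?_⟩
    obtain ⟨p, hp, hpj⟩ := (exists_prefix_flat_iff a (psum a j)).mpr ⟨j, hj, rfl⟩
    exact hpj ▸ (exists_prefix_flat_iff b _).mp (h.exists_prefix_sum_eq hp)
  · rintro ⟨hsum, h⟩
    refine refines_of_prefix_sums (fun x hx => by simpa using (List.mem_filter.mp hx).2)
      (by simpa only [sum_flat] using hsum) fun p hp => ?_
    obtain ⟨j, hj, hpj⟩ := (exists_prefix_flat_iff a p.sum).mp ⟨p, hp, rfl⟩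
    exact hpj ▸ (exists_prefix_flat_iff b _).mpr (h j hj)

end PartialSums

/-! ### Contents of sequences -/

section Content

variable {ι : Type*} {n d : ℕ}

/-- The weak composition counting the indices in `O` at which `γ` takes each value. -/
noncomputable def contentOn (O : Finset ι) (γ : ι → Fin n) : Fin n → ℕ :=
  fun j => (O.filter fun i => γ i = j).card

theorem psum_contentOn (O : Finset ι) (γ : ι → Fin n) (j : ℕ) :
    psum (contentOn O γ) j = (O.filter fun i => (γ i : ℕ) < j).card := by
  have hmaps : ∀ i ∈ O.filter fun i => (γ i : ℕ) < j,
      γ i ∈ Finset.univ.filter fun k : Fin n => (k : ℕ) < j := fun i hi => by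
    simpa using (Finset.mem_filter.mp hi).2
  rw [psum, Finset.card_eq_sum_card_fiberwise hmaps]
  refine Finset.sum_congr rfl fun k hk => congrArg Finset.card ?_
  rw [Finset.filter_filter]
  refine Finset.filter_congr fun i _ => ⟨?_, And.right⟩
  rintro rfl
  exact ⟨(Finset.mem_filter.mp hk).2, rfl⟩

theorem dominates_contentOn_iff [LinearOrder ι] {O : Finset ι} {γ : ι → Fin n} {f : ι → ℕ}
    (hγ : MonotoneOn γ O) (hf : MonotoneOn f O) {a : Fin n → ℕ}
    (ha : ∀ j ≤ n, psum a j = (O.filter fun i => f i < j).card) :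
    Dominates (contentOn O γ) a ↔ ∀ i ∈ O, (γ i : ℕ) ≤ f i := by
  constructor
  · intro h i hi
    by_contra! hlt
    have hcard := h ⟨f i + 1, by omega⟩
    rw [psum_contentOn, ha _ (by dsimp only; omega)] at hcard
    refine hcard.not_gt (Finset.card_lt_card ?_)
    refine (Finset.ssubset_iff_of_subset fun k hk => ?_).mpr ⟨i, ?_, ?_⟩
    · obtain ⟨hkO, hk⟩ := Finset.mem_filter.mp hk
      have hki : k ≤ i := not_lt.mp fun hik =>
        (Fin.le_def.mp (hγ hi hkO hik.le)).not_gt (hk.trans_le hlt)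
      exact Finset.mem_filter.mpr ⟨hkO, Nat.lt_succ_of_le (hf hkO hi hki)⟩
    · exact Finset.mem_filter.mpr ⟨hi, Nat.lt_succ_self _⟩
    · exact fun hmem => ((Finset.mem_filter.mp hmem).2.trans_le hlt).false
  · intro h j
    rw [psum_contentOn, ha _ (by omega)]
    exact Finset.card_le_card <| Finset.monotone_filter_right O fun k hk hkj =>
      (h k hk).trans_lt hkj

/-- The weak composition whose `j`-th entry is the number of occurrences of `j` in `γ`. -/
noncomputable abbrev content [Fintype ι] (γ : ι → Fin n) : Fin n → ℕ :=
  contentOn Finset.univ γ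

theorem val_lt_iff_lt_psum_content {f : Fin d → Fin n} (hf : Monotone f) (i : Fin d) (j : ℕ) :
    (f i : ℕ) < j ↔ (i : ℕ) < psum (content f) j := by
  rw [psum_contentOn]
  constructor
  · intro h
    have hsub : Finset.Iic i ⊆ Finset.univ.filter fun k => (f k : ℕ) < j := fun k hk => by
      simpa using (Fin.le_def.mp (hf (Finset.mem_Iic.mp hk))).trans_lt h
    simpa using Finset.card_le_card hsub
  · contrapose!
    intro h
    have hsub : (Finset.univ.filter fun k => (f k : ℕ) < j) ⊆ Finset.Iio i := fun k hk =>
      Finset.mem_Iio.mpr <| not_le.mp fun hik =>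
        (h.trans (Fin.le_def.mp (hf hik))).not_gt (Finset.mem_filter.mp hk).2
    simpa using Finset.card_le_card hsub

theorem psum_content_length (f : Fin d → Fin n) : psum (content f) n = d := by
  rw [psum_contentOn, Finset.filter_true_of_mem fun i _ => (f i).isLt, Finset.card_fin]

theorem sum_content (f : Fin d → Fin n) : ∑ j, content f j = d := by
  rw [← psum_length, psum_content_length]

theorem content_injective {f g : Fin d → Fin n} (hf : Monotone f) (hg : Monotone g)
    (h : content f = content g) : f = g := by
  funext i
  refine Fin.ext (eq_of_forall_gt_iff fun j => ?_)
  rw [val_lt_iff_lt_psum_content hf, val_lt_iff_lt_psum_content hg, h]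

theorem exists_monotone_content_eq (b : Fin n → ℕ) (hb : ∑ j, b j = d) :
    ∃ γ : Fin d → Fin n, Monotone γ ∧ content γ = b := by
  rw [← psum_length] at hb
  have hex : ∀ i : Fin d, ∃ j, (i : ℕ) < psum b (j + 1) := fun i =>
    ⟨n, (i.isLt.trans_eq hb.symm).trans_le (psum_mono b (Nat.le_succ n))⟩
  have hlt : ∀ (i : Fin d) (j : ℕ), Nat.find (hex i) < j ↔ (i : ℕ) < psum b j := by
    refine fun i j => ⟨fun h => (Nat.find_spec (hex i)).trans_le (psum_mono b h), fun h => ?_⟩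
    cases j with
    | zero => simp [psum_zero] at h
    | succ j => exact Nat.lt_succ_of_le (Nat.find_min' (hex i) h)
  refine ⟨fun i => ⟨Nat.find (hex i), (hlt i n).mpr (i.isLt.trans_eq hb.symm)⟩, ?_, ?_⟩
  · intro i k hik
    rw [Fin.mk_le_mk, ← Nat.lt_succ_iff, hlt]
    exact (Fin.le_def.mp hik).trans_lt ((hlt k _).mp (Nat.lt_succ_self _))
  · refine psum_ext fun j hj => ?_
    simp only [psum_contentOn, hlt]
    rw [Fin.card_filter_val_lt, ← hb]
    exact min_eq_right (psum_mono b hj)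

theorem exists_psum_content_eq_iff {f : Fin d → Fin n} (hf : Monotone f) {i k : Fin d}
    (hik : (i : ℕ) + 1 = k) : (∃ j ≤ n, psum (content f) j = k) ↔ f i < f k := by
  constructor
  · rintro ⟨j, -, hj⟩
    have hi := (val_lt_iff_lt_psum_content hf i j).mpr (by omega)
    have hk := (val_lt_iff_lt_psum_content hf k j).not.mpr (by omega)
    exact Fin.lt_def.mpr (by omega)
  · intro hlt
    have hi := (val_lt_iff_lt_psum_content hf i (f k)).mp hlt
    have hk := (val_lt_iff_lt_psum_content hf k (f k)).not.mp (lt_irrefl _)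
    exact ⟨f k, (f k).isLt.le, by omega⟩

theorem refines_content_iff {f g : Fin d → Fin n} (hf : Monotone f) (hg : Monotone g) :
    Refines (flat (content g)) (flat (content f)) ↔
      ∀ i k : Fin d, (i : ℕ) + 1 = k → f i < f k → g i < g k := by
  rw [refines_flat_iff, psum_content_length, psum_content_length, eq_self, true_and]
  constructor
  · intro h i k hik hlt
    obtain ⟨j, hj, hjk⟩ := (exists_psum_content_eq_iff hf hik).mpr hlt
    exact (exists_psum_content_eq_iff hg hik).mp (hjk ▸ h j hj)
  · intro h j hj
    have hle : psum (content f) j ≤ d := (psum_mono _ hj).trans_eq (psum_content_length f)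
    rcases Nat.eq_zero_or_pos (psum (content f) j) with hzero | hpos
    · exact ⟨0, Nat.zero_le _, by rw [hzero, psum_zero]⟩
    rcases hle.eq_or_lt with hd | hlt
    · exact ⟨n, le_rfl, by rw [hd, psum_content_length]⟩
    have hadj : psum (content f) j - 1 + 1 = psum (content f) j := Nat.sub_add_cancel hpos
    refine (exists_psum_content_eq_iff hg (i := ⟨_, by omega⟩) (k := ⟨_, hlt⟩) hadj).mpr ?_
    exact h _ _ hadj ((exists_psum_content_eq_iff hf hadj).mp ⟨j, hj, rfl⟩)

theorem dominates_content_iff {γ f : Fin d → Fin n} (hγ : Monotone γ) (hf : Monotone f) :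
    Dominates (content γ) (content f) ↔ γ ≤ f := by
  rw [dominates_contentOn_iff (f := fun i => (f i : ℕ)) (hγ.monotoneOn _)
    (fun i _ k _ hik => Fin.le_def.mp (hf hik)) fun j _ => psum_contentOn _ _ _]
  simp only [Finset.mem_univ, true_imp_iff, Pi.le_def, Fin.le_def]

theorem slideF_content {f : Fin d → Fin n} (hf : Monotone f) :
    slideF (content f) = ∑ γ ∈ (Finset.univ : Finset (Fin d → Fin n)).filter
      (fun γ => Monotone γ ∧ γ ≤ f ∧ ∀ i k : Fin d, (i : ℕ) + 1 = k → f i < f k → γ i < γ k),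
      MvPolynomial.monomial (Finsupp.equivFunOnFinite.symm (content γ)) 1 := by
  symm
  rw [slideF]
  refine Finset.sum_nbij (fun γ => content γ) ?_ ?_ ?_ fun _ _ => rfl
  · intro γ hγ
    obtain ⟨hm, hle, hs⟩ := (Finset.mem_filter.mp hγ).2
    refine Finset.mem_filter.mpr ⟨?_, (dominates_content_iff hm hf).mpr hle,
      (refines_content_iff hf hm).mpr hs⟩
    exact (sum_content f).trans (sum_content γ).symm ▸ mem_wcFinset_sum (content γ)
  · exact fun γ hγ γ' hγ' =>
      content_injective (Finset.mem_filter.mp hγ).2.1 (Finset.mem_filter.mp hγ').2.1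
  · intro b hb
    obtain ⟨-, hdom, hr⟩ := Finset.mem_filter.mp hb
    have hd : ∑ j, b j = d := by
      rw [← psum_length, (refines_flat_iff.mp hr).1, psum_content_length]
    obtain ⟨γ, hγ, rfl⟩ := exists_monotone_content_eq b hd
    exact ⟨γ, Finset.mem_coe.mpr (Finset.mem_filter.mpr ⟨Finset.mem_univ _, hγ,
      (dominates_content_iff hγ hf).mp hdom, (refines_content_iff hf hγ).mp hr⟩), rfl⟩

end Content

/-! ### Linear independence of the fundamental slide polynomials -/

section LinearIndependence

theorem linearIndependent_of_triangular {ι κ R M : Type*} [Ring R] [AddCommGroup M] [Module R M]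
    [LinearOrder κ] {v : ι → M} (φ : ι → M →ₗ[R] R) (rank : ι → κ) (hself : ∀ i, φ i (v i) = 1)
    (hlt : ∀ i j, j ≠ i → φ i (v j) ≠ 0 → rank j < rank i) : LinearIndependent R v := by
  refine linearIndependent_iff.mpr fun l hl => ?_
  by_contra hne
  obtain ⟨i, hi, hmin⟩ :=
    Finset.exists_min_image l.support rank (Finsupp.support_nonempty_iff.mpr hne)
  refine Finsupp.mem_support_iff.mp hi ?_
  have hφ := congrArg (φ i) hl
  rw [Finsupp.linearCombination_apply, Finsupp.sum, map_sum, map_zero,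
    Finset.sum_eq_single_of_mem i hi, map_smul, hself, smul_eq_mul, mul_one] at hφ
  · exact hφ
  · intro j hj hji
    rw [map_smul, smul_eq_mul]
    exact mul_eq_zero_of_right _ (not_not.mp fun h => (hlt i j hji h).not_ge (hmin j hj))

variable {n : ℕ}

theorem coeff_slideF (a b : Fin n → ℕ) :
    MvPolynomial.coeff (Finsupp.equivFunOnFinite.symm b) (slideF a) =
      if b ∈ (wcFinset n (∑ i, a i)).filter
        (fun b => Dominates b a ∧ Refines (flat b) (flat a)) then 1 else 0 := by
  rw [slideF, MvPolynomial.coeff_sum, ← Finset.sum_ite_eq' _ b fun _ => (1 : ℤ)]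
  refine Finset.sum_congr rfl fun c _ => ?_
  rw [MvPolynomial.coeff_monomial]
  simp only [EmbeddingLike.apply_eq_iff_eq]

theorem linearIndependent_slideF :
    LinearIndependent ℤ (slideF : (Fin n → ℕ) → MvPolynomial (Fin n) ℤ) := by
  refine linearIndependent_of_triangular
    (fun a => MvPolynomial.lcoeff ℤ (Finsupp.equivFunOnFinite.symm a))
    (fun a => ∑ j : Fin (n + 1), psum a j) (fun a => ?_) fun a b hba h => ?_
  · rw [MvPolynomial.lcoeff_apply, coeff_slideF, if_pos]
    exact Finset.mem_filter.mpr ⟨mem_wcFinset_sum a, fun _ => le_rfl,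
      refines_flat_iff.mpr ⟨rfl, fun j hj => ⟨j, hj, rfl⟩⟩⟩
  · rw [MvPolynomial.lcoeff_apply, coeff_slideF] at h
    have hab : Dominates a b := (Finset.mem_filter.mp (ite_ne_right_iff.mp h).1).2.1
    refine (Finset.sum_le_sum fun j _ => hab j).lt_of_ne fun heq => hba ?_
    have hpsum := (Finset.sum_eq_sum_iff_of_le fun j _ => hab j).mp heq
    exact Dominates.antisymm (fun j => (hpsum j (Finset.mem_univ j)).ge) hab

end LinearIndependence

/-! ### Compatible sequences -/

section Compat

variable {α : Type*} [LinearOrder α] {n d : ℕ} {b : Fin d → ℕ} {w : Fin d → α}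
  {γ δ f : Fin d → Fin n}

/-- A sequence `γ` is compatible with the word `w` and the bounds `b` if it is weakly increasing,
strictly so at the descents of `w`, and bounded above by `b`. The first two conditions are encoded
as monotonicity of the pairs `(γ i, w i)` in the lexicographic order. -/
def Compat (b : Fin d → ℕ) (w : Fin d → α) (γ : Fin d → Fin n) : Prop :=
  (Monotone fun i => toLex (γ i, w i)) ∧ ∀ i, (γ i : ℕ) ≤ b i

theorem Compat.monotone (h : Compat b w γ) : Monotone γ := fun _ _ hik =>
  (Prod.Lex.le_iff.mp (h.1 hik)).elim le_of_lt fun h => h.1.le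

theorem Compat.le_of_eq (h : Compat b w γ) {i k : Fin d} (hik : i ≤ k) (heq : γ i = γ k) :
    w i ≤ w k :=
  (Prod.Lex.toLex_le_toLex.mp (h.1 hik)).elim (fun hlt => absurd heq hlt.ne) And.right

theorem Compat.sup (hγ : Compat b w γ) (hδ : Compat b w δ) : Compat b w (γ ⊔ δ) := by
  refine ⟨?_, fun i => ?_⟩
  · have hsup : (fun i => toLex ((γ ⊔ δ) i, w i)) =
        (fun i => toLex (γ i, w i)) ⊔ fun i => toLex (δ i, w i) := funext fun i =>
      (show Monotone fun x => toLex (x, w i) from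
        fun _ _ h => Prod.Lex.toLex_mono ⟨h, le_rfl⟩).map_sup (γ i) (δ i)
    exact hsup ▸ hγ.1.sup hδ.1
  · rcases le_total (γ i) (δ i) with h | h
    · simpa [h] using hδ.2 i
    · simpa [h] using hγ.2 i

theorem exists_isGreatest_compat (hγ : Compat b w γ) :
    ∃ f : Fin d → Fin n, IsGreatest {γ | Compat b w γ} f := by
  obtain ⟨f, hf⟩ := (Set.toFinite {γ : Fin d → Fin n | Compat b w γ}).exists_maximal ⟨γ, hγ⟩
  exact ⟨f, hf.prop, fun δ hδ => le_sup_right.trans (hf.le_of_ge (hf.prop.sup hδ) le_sup_left)⟩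

theorem monotone_update {ι β : Type*} [DecidableEq ι] [PartialOrder ι] [Preorder β] {g : ι → β}
    (hg : Monotone g) {i : ι} {y : β} (hy : g i ≤ y) (hnext : ∀ k, i < k → y ≤ g k) :
    Monotone (Function.update g i y) := by
  intro s t hst
  rcases eq_or_ne t i with rfl | ht
  · rcases eq_or_ne s t with rfl | hs
    · exact le_rfl
    · simpa [hs] using (hg hst).trans hy
  · rcases eq_or_ne s i with rfl | hs
    · simpa [ht] using hnext t (hst.lt_of_ne ht.symm)
    · simpa [hs, ht] using hg hst

theorem Compat.update (hγ : Compat b w γ) {i : Fin d} {x : Fin n} (hx : γ i ≤ x)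
    (hxb : (x : ℕ) ≤ b i)
    (hnext : ∀ k : Fin d, (i : ℕ) + 1 = k → toLex (x, w i) ≤ toLex (γ k, w k)) :
    Compat b w (Function.update γ i x) := by
  refine ⟨?_, fun s => ?_⟩
  · have hupdate : (fun s => toLex (Function.update γ i x s, w s)) =
        Function.update (fun s => toLex (γ s, w s)) i (toLex (x, w i)) := by
      funext s
      rcases eq_or_ne s i with rfl | hs <;> simp [*]
    rw [hupdate]
    have hraise : toLex (γ i, w i) ≤ toLex (x, w i) :=
      Prod.Lex.toLex_mono (Prod.mk_le_mk.mpr ⟨hx, le_rfl⟩)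
    refine monotone_update hγ.1 hraise fun k hik => ?_
    exact (hnext ⟨i + 1, by omega⟩ rfl).trans (hγ.1 (Fin.le_def.mpr hik))
  · rcases eq_or_ne s i with rfl | hs
    · rwa [Function.update_self]
    · rw [Function.update_of_ne hs]
      exact hγ.2 s

/-- If a compatible sequence exceeds `γ`, then `γ` can be raised at the last entry where it does. -/
theorem isGreatest_compat_iff (hγ : Compat b w γ) :
    IsGreatest {γ | Compat b w γ} γ ↔ ∀ (i : Fin d) (x : Fin n), γ i < x → (x : ℕ) ≤ b i →
      ∃ k : Fin d, (i : ℕ) + 1 = k ∧ toLex (γ k, w k) < toLex (x, w i) := by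
  constructor
  · intro h i x hix hxb
    by_contra! hnext
    have hle := h.2 (hγ.update hix.le hxb hnext) i
    rw [Function.update_self] at hle
    exact hix.not_ge hle
  · refine fun h => ⟨hγ, fun δ hδ => ?_⟩
    by_contra hle
    obtain ⟨i, hi⟩ : ∃ i, γ i < δ i := by simpa [Pi.le_def] using hle
    obtain ⟨i, hlt, hlast⟩ := (Set.toFinite {i | γ i < δ i}).exists_maximal ⟨i, hi⟩
    obtain ⟨k, hik, hk⟩ := h i (δ i) hlt (hδ.2 i)
    have hikle : i < k := Fin.lt_def.mpr (by omega)
    have hδk : δ k ≤ γ k := not_lt.mp fun hlt => hikle.not_ge (hlast hlt hikle.le)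
    exact hk.not_ge ((hδ.1 hikle.le).trans (Prod.Lex.toLex_mono ⟨hδk, le_rfl⟩))

theorem lt_of_lt_of_adjacent {β β' : Type*} [Preorder β] [PartialOrder β'] {g : Fin d → β}
    {h : Fin d → β'} (hg : Monotone g) (hh : Monotone h)
    (hadj : ∀ i k : Fin d, (i : ℕ) + 1 = k → h i < h k → g i < g k) {i k : Fin d}
    (hlt : h i < h k) : g i < g k := by
  have hik : i < k := hh.reflect_lt hlt
  obtain ⟨k, hk⟩ := k
  induction k with
  | zero => exact absurd (Fin.lt_def.mp hik) (Nat.not_lt_zero _)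
  | succ k ih =>
    have hle : i ≤ ⟨k, by omega⟩ := Fin.le_def.mpr (Nat.lt_succ_iff.mp (Fin.lt_def.mp hik))
    have hstep : (⟨k, by omega⟩ : Fin d) ≤ ⟨k + 1, hk⟩ := Fin.le_def.mpr (Nat.le_succ k)
    rcases (hh hstep).lt_or_eq with hjump | heq
    · exact (hg hle).trans_lt (hadj _ _ rfl hjump)
    · have hlt' := hlt.trans_eq heq.symm
      exact (ih _ hlt' (hh.reflect_lt hlt')).trans_le (hg hstep)

/-- The generating function of the sequences in `{0, …, n - 1}` compatible with `w` and `b`. -/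
noncomputable def compatPoly (n : ℕ) (b : Fin d → ℕ) (w : Fin d → α) : MvPolynomial (Fin n) ℤ :=
  ∑ γ ∈ (Finset.univ : Finset (Fin d → Fin n)).filter (Compat b w),
    MvPolynomial.monomial (Finsupp.equivFunOnFinite.symm (content γ)) 1

theorem compat_iff_of_isGreatest (hb : ∀ i k, w i ≤ w k → b k ≤ b i)
    (hf : IsGreatest {γ | Compat b w γ} f) :
    Compat b w γ ↔ Monotone γ ∧ γ ≤ f ∧
      ∀ i k : Fin d, (i : ℕ) + 1 = k → f i < f k → γ i < γ k := by
  have hfc : Compat b w f := hf.1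
  constructor
  · refine fun hγ => ⟨hγ.monotone, hf.2 hγ, fun i k hik hlt => ?_⟩
    have hle : i ≤ k := Fin.le_def.mpr (by omega)
    by_contra hγik
    have hw : w i ≤ w k := hγ.le_of_eq hle ((hγ.monotone hle).eq_of_not_lt hγik)
    obtain ⟨k', hik', hlt'⟩ :=
      (isGreatest_compat_iff hfc).mp hf i (f k) hlt ((hfc.2 k).trans (hb i k hw))
    obtain rfl : k = k' := Fin.ext (by omega)
    exact hlt'.not_ge (Prod.Lex.toLex_mono ⟨le_rfl, hw⟩)
  · rintro ⟨hγ, hle, hadj⟩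
    refine ⟨fun i k hik => Prod.Lex.toLex_le_toLex.mpr ?_,
      fun i => (Fin.le_def.mp (hle i)).trans (hfc.2 i)⟩
    refine (hγ hik).lt_or_eq.imp_right fun heq => ⟨heq, hfc.le_of_eq hik ?_⟩
    exact (hfc.monotone hik).eq_of_not_lt fun hlt =>
      (lt_of_lt_of_adjacent hγ hfc.monotone hadj hlt).ne heq

theorem compatPoly_eq_slideF (hb : ∀ i k, w i ≤ w k → b k ≤ b i)
    (hf : IsGreatest {γ | Compat b w γ} f) : compatPoly n b w = slideF (content f) := by
  have hfc : Compat b w f := hf.1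
  rw [compatPoly, slideF_content hfc.monotone]
  simp only [compat_iff_of_isGreatest hb hf]

/-- The slide expansion of `compatPoly n b w`: the content of the greatest compatible sequence, or
`0` if no sequence is compatible. -/
noncomputable def compatTerm (b : Fin d → ℕ) (w : Fin d → α) : (Fin n → ℕ) →₀ ℤ :=
  ∑ f ∈ (Finset.univ : Finset (Fin d → Fin n)).filter (IsGreatest {γ | Compat b w γ}),
    Finsupp.single (content f) 1

theorem compatTerm_of_isGreatest (hf : IsGreatest {γ | Compat b w γ} f) :
    compatTerm b w = Finsupp.single (content f) 1 := by
  have hfilter : (Finset.univ : Finset (Fin d → Fin n)).filter (IsGreatest {γ | Compat b w γ}) =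
      {f} := Finset.ext fun g => by
    rw [Finset.mem_filter_univ, Finset.mem_singleton]
    exact ⟨fun hg => hg.unique hf, fun h => h ▸ hf⟩
  rw [compatTerm, hfilter, Finset.sum_singleton]

theorem compatTerm_of_not_exists (h : ¬∃ f : Fin d → Fin n, IsGreatest {γ | Compat b w γ} f) :
    compatTerm b w = (0 : (Fin n → ℕ) →₀ ℤ) := by
  rw [compatTerm, Finset.filter_false_of_mem fun f _ hf => h ⟨f, hf⟩, Finset.sum_empty]

theorem compatTerm_apply (b : Fin d → ℕ) (w : Fin d → α) (c : Fin n → ℕ) :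
    compatTerm b w c = if ∃ f, IsGreatest {γ | Compat b w γ} f ∧ c = content f then 1 else 0 := by
  by_cases h : ∃ f : Fin d → Fin n, IsGreatest {γ | Compat b w γ} f
  · obtain ⟨f, hf⟩ := h
    rw [compatTerm_of_isGreatest hf, Finsupp.single_apply]
    refine if_congr ⟨fun h => ⟨f, hf, h.symm⟩, ?_⟩ rfl rfl
    rintro ⟨g, hg, rfl⟩
    rw [hg.unique hf]
  · rw [compatTerm_of_not_exists h, Finsupp.zero_apply, if_neg]
    exact fun ⟨f, hf, _⟩ => h ⟨f, hf⟩

theorem linearCombination_compatTerm (hb : ∀ i k, w i ≤ w k → b k ≤ b i) :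
    Finsupp.linearCombination ℤ slideF (compatTerm b w) = compatPoly n b w := by
  by_cases h : ∃ f : Fin d → Fin n, IsGreatest {γ | Compat b w γ} f
  · obtain ⟨f, hf⟩ := h
    rw [compatTerm_of_isGreatest hf, Finsupp.linearCombination_single, one_smul,
      compatPoly_eq_slideF hb hf]
  · rw [compatTerm_of_not_exists h, map_zero, compatPoly,
      Finset.filter_false_of_mem fun γ _ hγ => h (exists_isGreatest_compat hγ), Finset.sum_empty]

end Compat

/-! ### Products of generating functions of compatible sequences -/

section Product

variable {n : ℕ}

theorem prod_X_eq_monomial_content {ι R : Type*} [Fintype ι] [CommSemiring R] (γ : ι → Fin n) :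
    ∏ i, (MvPolynomial.X (γ i) : MvPolynomial (Fin n) R) =
      MvPolynomial.monomial (Finsupp.equivFunOnFinite.symm (content γ)) 1 := by
  simp only [MvPolynomial.X]
  rw [← MvPolynomial.monomial_sum_one]
  refine congrArg (fun e => MvPolynomial.monomial e (1 : R)) (Finsupp.ext fun j => ?_)
  simp [Finsupp.finsetSum_apply, Finsupp.single_apply, contentOn, Finset.sum_boole]

/-- The positions at which a letter `z` may be placed after `p = (position, letter)` in a sequence
compatible with the bound `m z`. -/
noncomputable def steps (n : ℕ) (m : ℕ → ℕ) (p : ℕ ×ₗ ℕ) (z : ℕ) : Finset (Fin n) :=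
  Finset.univ.filter fun j => p ≤ toLex ((j : ℕ), z) ∧ (j : ℕ) ≤ m z

theorem mem_steps {m : ℕ → ℕ} {p : ℕ ×ₗ ℕ} {z : ℕ} {j : Fin n} :
    j ∈ steps n m p z ↔ p ≤ toLex ((j : ℕ), z) ∧ (j : ℕ) ≤ m z := by
  rw [steps, Finset.mem_filter_univ]

theorem steps_eq_filter {m : ℕ → ℕ} {p q : ℕ ×ₗ ℕ} (hpq : p ≤ q) (z : ℕ) :
    steps n m q z = (steps n m p z).filter fun j : Fin n => q ≤ toLex ((j : ℕ), z) := by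
  ext j
  rw [Finset.mem_filter, mem_steps, mem_steps]
  exact ⟨fun h => ⟨⟨hpq.trans h.1, h.2⟩, h.1⟩, fun h => ⟨h.2, h.1.2⟩⟩

/-- The generating function of the sequences compatible with a word `w` and the bounds `m z` on
its letters `z`, all of whose pairs `(position, letter)` are lexicographically at least `p`. -/
noncomputable def compatSum (n : ℕ) (m : ℕ → ℕ) : ℕ ×ₗ ℕ → List ℕ → MvPolynomial (Fin n) ℤ
  | _, [] => 1
  | p, z :: w => ∑ j ∈ steps n m p z,
      MvPolynomial.X j * compatSum n m (toLex ((j : ℕ), z)) w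

theorem sum_map_compatSum_cons (m : ℕ → ℕ) (p : ℕ ×ₗ ℕ) (z : ℕ) (S : Multiset (List ℕ)) :
    (S.map fun C => compatSum n m p (z :: C)).sum = ∑ j ∈ steps n m p z,
      MvPolynomial.X j * (S.map (compatSum n m (toLex ((j : ℕ), z)))).sum := by
  induction S using Multiset.induction with
  | empty => simp
  | cons C S ih =>
    simp only [Multiset.map_cons, Multiset.sum_cons, ih, mul_add]
    rw [compatSum, ← Finset.sum_add_distrib]

theorem mul_compatSum_cons (m : ℕ → ℕ) {p q : ℕ ×ₗ ℕ} (hpq : p ≤ q) (y : ℕ) (B : List ℕ)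
    (F : MvPolynomial (Fin n) ℤ) :
    F * compatSum n m q (y :: B) = ∑ k ∈ steps n m p y, if q ≤ toLex ((k : ℕ), y) then
      F * (MvPolynomial.X k * compatSum n m (toLex ((k : ℕ), y)) B) else 0 := by
  rw [compatSum, steps_eq_filter hpq, Finset.mul_sum, Finset.sum_filter]

/-- The first letter of a product of compatible sequences is the smaller of the two first
pairs `(position, letter)`, which are never equal. -/
theorem compatSum_mul_compatSum (m : ℕ → ℕ) (A B : List ℕ) (hAB : ∀ z ∈ A, ∀ y ∈ B, z ≠ y)
    (p : ℕ ×ₗ ℕ) :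
    compatSum n m p A * compatSum n m p B = ((shuffles A B).map (compatSum n m p)).sum := by
  induction A generalizing B p with
  | nil => simp [shuffles, compatSum]
  | cons z A ihA =>
    induction B generalizing p with
    | nil => simp [shuffles, compatSum]
    | cons y B ihB =>
      have hzy : z ≠ y := hAB z List.mem_cons_self y List.mem_cons_self
      have hA := ihA (y :: B) fun z' hz' => hAB z' (List.mem_cons_of_mem z hz')
      have hB := ihB fun z' hz' y' hy' => hAB z' hz' y' (List.mem_cons_of_mem y hy')
      rw [shuffles, Multiset.map_add, Multiset.sum_add, Multiset.map_map, Multiset.map_map]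
      simp only [Function.comp_def]
      rw [sum_map_compatSum_cons, sum_map_compatSum_cons]
      simp only [← hA, ← hB]
      have hfirst : ∀ j ∈ steps n m p z,
          MvPolynomial.X j * (compatSum n m (toLex ((j : ℕ), z)) A *
            compatSum n m (toLex ((j : ℕ), z)) (y :: B)) = _ := fun j hj => by
        rw [← mul_assoc, mul_compatSum_cons m (mem_steps.mp hj).1]
      have hsecond : ∀ k ∈ steps n m p y,
          MvPolynomial.X k * (compatSum n m (toLex ((k : ℕ), y)) (z :: A) *
            compatSum n m (toLex ((k : ℕ), y)) B) = _ := fun k hk => by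
        rw [mul_left_comm, mul_comm, mul_compatSum_cons m (mem_steps.mp hk).1]
      rw [Finset.sum_congr rfl hfirst, Finset.sum_congr rfl hsecond,
        Finset.sum_comm (s := steps n m p y), ← Finset.sum_add_distrib, compatSum, compatSum,
        Finset.sum_mul_sum]
      refine Finset.sum_congr rfl fun j _ => ?_
      rw [← Finset.sum_add_distrib]
      refine Finset.sum_congr rfl fun k _ => ?_
      have hne : toLex ((j : ℕ), z) ≠ toLex ((k : ℕ), y) := fun h => hzy
        (Prod.ext_iff.mp (toLex.injective h)).2
      rcases hne.lt_or_gt with h | h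
      · rw [if_pos h.le, if_neg h.not_ge, add_zero]
      · rw [if_neg h.not_ge, if_pos h.le, zero_add, mul_comm]

theorem monotone_fin_cons {d : ℕ} {β : Type*} [Preorder β] {x : β} {f : Fin d → β} :
    Monotone (Fin.cons x f : Fin (d + 1) → β) ↔ (∀ i, x ≤ f i) ∧ Monotone f := by
  refine ⟨fun h => ⟨fun i => h (Fin.zero_le i.succ), fun i k hik => ?_⟩, fun h i k hik => ?_⟩
  · exact h (Fin.succ_le_succ_iff.mpr hik)
  · cases k using Fin.cases with
    | zero => rw [Fin.le_zero_iff.mp hik]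
    | succ k =>
      cases i using Fin.cases with
      | zero => exact h.1 k
      | succ i => exact h.2 (Fin.succ_le_succ_iff.mp hik)

theorem compat_cons_iff {m : ℕ → ℕ} {z : ℕ} {w : List ℕ} {j : Fin n} {γ : Fin w.length → Fin n} :
    Compat (fun i => m ((z :: w).get i)) (z :: w).get (Fin.cons j γ) ↔
      (j : ℕ) ≤ m z ∧ (∀ i, toLex ((j : ℕ), z) ≤ toLex ((γ i : ℕ), w.get i)) ∧
        Compat (fun i => m (w.get i)) w.get γ := by
  have hcons : (fun i => toLex ((Fin.cons j γ : Fin (w.length + 1) → Fin n) i, (z :: w).get i)) =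
      Fin.cons (toLex (j, z)) fun i => toLex (γ i, w.get i) :=
    funext fun i => by cases i using Fin.cases <;> rfl
  have hval : ∀ i, toLex (j, z) ≤ toLex (γ i, w.get i) ↔
      toLex ((j : ℕ), z) ≤ toLex ((γ i : ℕ), w.get i) := fun i => by
    rw [Prod.Lex.toLex_le_toLex, Prod.Lex.toLex_le_toLex, Fin.lt_def, Fin.ext_iff]
  have hmono : Monotone (fun i => toLex
      ((Fin.cons j γ : Fin (w.length + 1) → Fin n) i, (z :: w).get i)) ↔
      (∀ i, toLex ((j : ℕ), z) ≤ toLex ((γ i : ℕ), w.get i)) ∧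
        Monotone fun i => toLex (γ i, w.get i) := by
    rw [hcons, monotone_fin_cons, forall_congr' hval]
  refine (and_congr hmono Fin.forall_fin_succ).trans ?_
  exact ⟨fun ⟨⟨hj, hγ⟩, hz, hb⟩ => ⟨hz, hj, hγ, hb⟩, fun ⟨hz, hj, hγ, hb⟩ => ⟨⟨hj, hγ⟩, hz, hb⟩⟩

theorem compatSum_eq_sum (m : ℕ → ℕ) (p : ℕ ×ₗ ℕ) (w : List ℕ) :
    compatSum n m p w = ∑ γ ∈ (Finset.univ : Finset (Fin w.length → Fin n)).filter
      (fun γ => (∀ i, p ≤ toLex ((γ i : ℕ), w.get i)) ∧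
        Compat (fun i => m (w.get i)) w.get γ), ∏ i, MvPolynomial.X (γ i) := by
  induction w generalizing p with
  | nil =>
    rw [Finset.filter_true_of_mem]
    · simp [compatSum]
    · exact fun γ _ => ⟨fun i => i.elim0, fun i => i.elim0, fun i => i.elim0⟩
  | cons z w ih =>
    rw [compatSum, Finset.sum_filter]
    refine Eq.trans ?_ ((Fin.consEquiv fun _ : Fin (w.length + 1) => Fin n).sum_comp _)
    rw [Fintype.sum_prod_type, steps, Finset.sum_filter]
    refine Finset.sum_congr rfl fun j _ => ?_
    rw [ih, Finset.sum_filter, Finset.mul_sum, Finset.ite_sum_zero]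
    refine Finset.sum_congr rfl fun γ _ => ?_
    have hcons : ((∀ i, p ≤ toLex (((Fin.cons j γ : Fin (w.length + 1) → Fin n) i : ℕ),
        (z :: w).get i)) ∧ Compat (fun i => m ((z :: w).get i)) (z :: w).get (Fin.cons j γ)) ↔
        (p ≤ toLex ((j : ℕ), z) ∧ (j : ℕ) ≤ m z) ∧
          (∀ i, toLex ((j : ℕ), z) ≤ toLex ((γ i : ℕ), w.get i)) ∧
            Compat (fun i => m (w.get i)) w.get γ := by
      refine (and_congr Fin.forall_fin_succ compat_cons_iff).trans ?_
      exact ⟨fun ⟨⟨hp, _⟩, hz, hj, hc⟩ => ⟨⟨hp, hz⟩, hj, hc⟩,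
        fun ⟨⟨hp, hz⟩, hj, hc⟩ => ⟨⟨hp, fun i => hp.trans (hj i)⟩, hz, hj, hc⟩⟩
    have hprod : ∏ i, MvPolynomial.X (R := ℤ) (Fin.consEquiv (fun _ => Fin n) (j, γ) i) =
        MvPolynomial.X j * ∏ i, MvPolynomial.X (γ i) := Fin.prod_univ_succ _
    rw [mul_ite, mul_zero, ← ite_and]
    exact if_congr hcons.symm hprod.symm rfl

theorem compatSum_bot (m : ℕ → ℕ) (w : List ℕ) :
    compatSum n m ⊥ w = compatPoly n (fun i => m (w.get i)) w.get := by
  rw [compatSum_eq_sum, compatPoly]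
  exact Finset.sum_congr (Finset.filter_congr fun γ _ => and_iff_right fun i => bot_le)
    fun γ _ => prod_X_eq_monomial_content γ

theorem card_filter_get_eq_countP {α : Type*} (l : List α) (p : α → Prop) [DecidablePred p] :
    ((Finset.univ : Finset (Fin l.length)).filter fun i => p (l.get i)).card =
      l.countP (fun x => decide (p x)) := by
  induction l with
  | nil => simp
  | cons x l ih =>
    refine (Fin.card_filter_univ_succ (n := l.length) fun i => p ((x :: l).get i)).trans ?_
    rw [List.countP_cons, ← ih]
    simp only [List.get_eq_getElem, List.length_cons, Fin.val_zero, List.getElem_cons_zero,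
      Fin.val_succ, List.getElem_cons_succ, decide_eq_true_eq]
    split_ifs <;> rfl

theorem slideF_eq_compatSum {m : ℕ → ℕ} (hm : Antitone m) {a : Fin n → ℕ} {w : List ℕ}
    (hw : w.Pairwise (· ≥ ·)) (hlt : ∀ z ∈ w, m z < n) (hinj : Set.InjOn m {z | z ∈ w})
    (ha : ∀ j ≤ n, psum a j = w.countP (fun z => decide (m z < j))) :
    slideF a = compatSum n m ⊥ w := by
  let f : Fin w.length → Fin n := fun i => ⟨m (w.get i), hlt _ (List.get_mem _ _)⟩
  have hanti : Antitone w.get := fun i k hik => hik.eq_or_lt.elim (fun h => h ▸ le_rfl)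
    (List.pairwise_iff_get.mp hw i k)
  have hf : IsGreatest {γ | Compat (fun i => m (w.get i)) w.get γ} f := by
    refine ⟨⟨fun i k hik => Prod.Lex.toLex_le_toLex.mpr ?_, fun i => le_rfl⟩,
      fun γ hγ i => Fin.le_def.mpr (hγ.2 i)⟩
    refine (Fin.le_def.mpr (hm (hanti hik)) : f i ≤ f k).lt_or_eq.imp_right fun h => ⟨h, ?_⟩
    exact (hinj (List.get_mem _ _) (List.get_mem _ _) (Fin.ext_iff.mp h)).le
  have hfa : content f = a := psum_ext fun j hj => by
    rw [psum_contentOn, ha j hj]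
    exact card_filter_get_eq_countP w fun z => m z < j
  rw [compatSum_bot, compatPoly_eq_slideF (fun i k hik => hm hik) hf, hfa]

/-- The word `(ℓ 0)^{a 0} (ℓ 1)^{a 1} ⋯`. -/
def powerWord (a ℓ : Fin n → ℕ) : List ℕ :=
  (List.ofFn fun i => List.replicate (a i) (ℓ i)).flatten

variable {a b ℓ : Fin n → ℕ}

theorem mem_range_of_mem_powerWord {z : ℕ} (hz : z ∈ powerWord a ℓ) : ∃ i, ℓ i = z := by
  obtain ⟨l, hl, hz⟩ := List.mem_flatten.mp hz
  obtain ⟨i, rfl⟩ := List.mem_ofFn.mp hl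
  exact ⟨i, (List.eq_of_mem_replicate hz).symm⟩

theorem countP_powerWord (a : Fin n → ℕ) {m : ℕ → ℕ} (hℓ : ∀ i, m (ℓ i) = i) (j : ℕ) :
    (powerWord a ℓ).countP (fun z => decide (m z < j)) = psum a j := by
  rw [powerWord, List.countP_flatten, List.map_ofFn, List.sum_ofFn, psum, Finset.sum_filter]
  refine Finset.sum_congr rfl fun i _ => ?_
  rw [Function.comp_apply, List.countP_replicate, hℓ]
  simp

theorem pairwise_powerWord (a : Fin n → ℕ) (hℓ : Antitone ℓ) :
    (powerWord a ℓ).Pairwise (· ≥ ·) := by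
  refine List.pairwise_flatten.mpr ⟨fun l hl => ?_, List.pairwise_ofFn.mpr ?_⟩
  · obtain ⟨i, rfl⟩ := List.mem_ofFn.mp hl
    exact List.pairwise_replicate.mpr (Or.inr le_rfl)
  · intro i k hik x hx y hy
    rw [List.eq_of_mem_replicate hx, List.eq_of_mem_replicate hy]
    exact hℓ hik.le

theorem slideF_eq_compatSum_powerWord (a : Fin n → ℕ) {m : ℕ → ℕ} (hm : Antitone m)
    (hℓ : Antitone ℓ) (hmℓ : ∀ i, m (ℓ i) = i) :
    slideF a = compatSum n m ⊥ (powerWord a ℓ) := by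
  refine slideF_eq_compatSum hm (pairwise_powerWord a hℓ) (fun z hz => ?_) (fun z hz y hy h => ?_)
    fun j _ => (countP_powerWord a hmℓ j).symm
  · obtain ⟨i, rfl⟩ := mem_range_of_mem_powerWord hz
    exact (hmℓ i).trans_lt i.isLt
  · obtain ⟨i, rfl⟩ := mem_range_of_mem_powerWord hz
    obtain ⟨k, rfl⟩ := mem_range_of_mem_powerWord hy
    rw [hmℓ, hmℓ] at h
    rw [Fin.ext h]

/-- The 0-indexed position `i` encoded by the letters `2n - 2i - 1` and `2n - 2i` of the words of
weak compositions. -/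
def letterBound (n z : ℕ) : ℕ := (2 * n - z) / 2

theorem letterBound_antitone (n : ℕ) : Antitone (letterBound n) := fun _ _ hxy =>
  Nat.div_le_div_right (Nat.sub_le_sub_left hxy _)

theorem letterBound_odd (i : Fin n) : letterBound n (2 * n - 2 * (i : ℕ) - 1) = i := by
  unfold letterBound
  omega

theorem letterBound_even (i : Fin n) : letterBound n (2 * n - 2 * (i : ℕ)) = i := by
  unfold letterBound
  omega

theorem antitone_odd_letter : Antitone fun i : Fin n => 2 * n - 2 * (i : ℕ) - 1 :=
  fun i k hik => by
    have := Fin.le_def.mp hik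
    dsimp only
    omega

theorem antitone_even_letter : Antitone fun i : Fin n => 2 * n - 2 * (i : ℕ) :=
  fun i k hik => by
    have := Fin.le_def.mp hik
    dsimp only
    omega

theorem odd_of_mem_wordA {z : ℕ} (hz : z ∈ wordA a) : z % 2 = 1 := by
  obtain ⟨i, rfl⟩ := mem_range_of_mem_powerWord hz
  omega

theorem even_of_mem_wordB {z : ℕ} (hz : z ∈ wordB b) : z % 2 = 0 := by
  obtain ⟨i, rfl⟩ := mem_range_of_mem_powerWord hz
  omega

theorem slideF_mul_slideF_eq_sum_shuffles (a b : Fin n → ℕ) :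
    slideF a * slideF b = ((shuffles (wordA a) (wordB b)).map fun C =>
      compatPoly n (fun i => letterBound n (C.get i)) C.get).sum := by
  have hAB : ∀ z ∈ wordA a, ∀ y ∈ wordB b, z ≠ y := fun z hz y hy h => by
    have hodd := odd_of_mem_wordA hz
    rw [h, even_of_mem_wordB hy] at hodd
    exact zero_ne_one hodd
  simp only [← compatSum_bot]
  rw [← compatSum_mul_compatSum _ _ _ hAB,
    slideF_eq_compatSum_powerWord a (letterBound_antitone n) antitone_odd_letter letterBound_odd,
    slideF_eq_compatSum_powerWord b (letterBound_antitone n) antitone_even_letter letterBound_even]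
  rfl

end Product

/-! ### Runs of shuffles -/

section Runs

variable {C : List ℕ}

theorem filter_of_mem_shuffles (p : ℕ → Bool) {A B : List ℕ} (hC : C ∈ shuffles A B)
    (hA : ∀ z ∈ A, p z = true) (hB : ∀ z ∈ B, p z = false) : C.filter p = A := by
  induction A generalizing B C with
  | nil =>
    obtain rfl : C = B := by simpa [shuffles] using hC
    simpa using hB
  | cons x A ihA =>
    induction B generalizing C with
    | nil =>
      obtain rfl : C = x :: A := by simpa [shuffles] using hC
      simpa using hA
    | cons y B ihB =>
      rw [shuffles, Multiset.mem_add, Multiset.mem_map, Multiset.mem_map] at hC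
      rcases hC with ⟨C, hC, rfl⟩ | ⟨C, hC, rfl⟩
      · rw [List.filter_cons_of_pos (hA x List.mem_cons_self),
          ihA hC (fun z hz => hA z (List.mem_cons_of_mem x hz)) hB]
      · rw [List.filter_cons_of_neg (Bool.not_eq_true _ ▸ hB y List.mem_cons_self),
          ihB hC fun z hz => hB z (List.mem_cons_of_mem y hz)]

theorem shuffles_comm (A B : List ℕ) : shuffles A B = shuffles B A := by
  induction A generalizing B with
  | nil => cases B <;> simp [shuffles]
  | cons x A ihA =>
    induction B with
    | nil => simp [shuffles]
    | cons y B ihB => rw [shuffles, shuffles, ihA, ihB, add_comm]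

theorem runsWeak_cons_cons (x y : ℕ) (l : List ℕ) : ∃ R Rs, runsWeak (y :: l) = R :: Rs ∧
    runsWeak (x :: y :: l) = if x ≤ y then (x :: R) :: Rs else [x] :: R :: Rs := by
  have hne : runsWeak (y :: l) ≠ [] := by
    unfold runsWeak
    split
    · split_ifs <;> simp
    · simp
  obtain ⟨R, Rs, h⟩ := List.exists_cons_of_ne_nil hne
  refine ⟨R, Rs, h, ?_⟩
  rw [runsWeak.eq_def]
  simp only [h]

theorem ne_nil_of_mem_runsWeak {R : List ℕ} (hR : R ∈ runsWeak C) : R ≠ [] := by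
  induction C generalizing R with
  | nil => simp [runsWeak] at hR
  | cons x l ih =>
    cases l with
    | nil => simp_all [runsWeak]
    | cons y l =>
      obtain ⟨R', Rs, h, hx⟩ := runsWeak_cons_cons x y l
      rw [hx] at hR
      rw [h] at ih
      split_ifs at hR <;> rcases List.mem_cons.mp hR with rfl | hR
      · exact List.cons_ne_nil _ _
      · exact ih (List.mem_cons_of_mem _ hR)
      · exact List.cons_ne_nil _ _
      · exact ih hR

/-- The index of the weakly increasing run containing the letter at position `i`, that is, the
number of descents before it. -/
def runIndex : List ℕ → ℕ → ℕ
  | x :: y :: l, i + 1 => runIndex (y :: l) i + if x ≤ y then 0 else 1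
  | _, _ => 0

theorem runIndex_zero (C : List ℕ) : runIndex C 0 = 0 := by
  unfold runIndex
  split <;> simp_all

theorem runIndex_succ {i : ℕ} (hi : i + 1 < C.length) :
    runIndex C (i + 1) = runIndex C i + if C[i] ≤ C[i + 1] then 0 else 1 := by
  induction C generalizing i with
  | nil => exact absurd hi (Nat.not_lt_zero _)
  | cons x l ih =>
    cases l with
    | nil => simp at hi
    | cons y l =>
      cases i with
      | zero => simp [runIndex, runIndex_zero]
      | succ i =>
        rw [runIndex, ih (Nat.lt_of_succ_lt_succ hi), runIndex, add_right_comm]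
        rfl

theorem card_filter_runIndex (C : List ℕ) (p : ℕ → Prop) [DecidablePred p] (k : ℕ) :
    ((Finset.univ : Finset (Fin C.length)).filter fun i : Fin C.length =>
      runIndex C i = k ∧ p (C.get i)).card =
        ((runsWeak C).getD k []).countP (fun z => decide (p z)) := by
  induction C generalizing k with
  | nil => simp [runsWeak]
  | cons x l ih =>
    refine (Fin.card_filter_univ_succ (n := l.length) fun i =>
      runIndex (x :: l) i = k ∧ p ((x :: l).get i)).trans ?_
    cases l with
    | nil => cases k <;> simp [runsWeak, runIndex, List.countP_cons]
    | cons y l =>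
      obtain ⟨R, Rs, hR, hxR⟩ := runsWeak_cons_cons x y l
      rw [hR] at ih
      by_cases hxy : x ≤ y
      · rw [hxR, if_pos hxy]
        specialize ih k
        cases k with
        | zero =>
          rw [List.getD_cons_zero] at ih ⊢
          rw [List.countP_cons, ← ih]
          by_cases hp : p x <;> simp [hp, hxy, runIndex, add_comm]
        | succ k =>
          rw [List.getD_cons_succ] at ih ⊢
          rw [← ih]
          simp [runIndex, hxy]
      · rw [hxR, if_neg hxy]
        cases k with
        | zero => by_cases hp : p x <;> simp [hp, hxy, runIndex]
        | succ k =>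
          rw [List.getD_cons_succ, ← ih k]
          simp [runIndex, hxy]

/-- `runIndex` as an index into the list of runs. -/
def runOf (C : List ℕ) (i : Fin C.length) : Fin (runsWeak C).length :=
  ⟨runIndex C i, by
    by_contra! h
    have hcard := card_filter_runIndex C (fun _ => True) (runIndex C (i : ℕ))
    rw [List.getD_eq_default _ _ h, List.countP_nil, Finset.card_eq_zero,
      Finset.filter_eq_empty_iff] at hcard
    exact hcard (Finset.mem_univ i) ⟨rfl, trivial⟩⟩

theorem card_filter_runOf (p : ℕ → Prop) [DecidablePred p] (k : Fin (runsWeak C).length) :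
    ((Finset.univ.filter fun i => p (C.get i)).filter fun i => runOf C i = k).card =
      (((runsWeak C).get k).filter fun z => decide (p z)).length := by
  rw [← List.countP_eq_length_filter, List.get_eq_getElem,
    ← List.getD_eq_getElem _ [] k.isLt, ← card_filter_runIndex, Finset.filter_filter]
  refine congrArg Finset.card (Finset.filter_congr fun i _ => ?_)
  rw [and_comm, Fin.ext_iff, runOf]

theorem exists_isGreatest_runOf_eq (k : Fin (runsWeak C).length) :
    ∃ t, IsGreatest {i | runOf C i = k} t := by
  have hne : (Finset.univ.filter fun i => runOf C i = k).Nonempty := by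
    have hcard := card_filter_runOf (fun _ => True) k
    simp only [decide_true, List.filter_true, Finset.filter_true] at hcard
    rw [← Finset.card_pos, hcard, List.length_pos_iff]
    exact ne_nil_of_mem_runsWeak (List.get_mem _ _)
  have hgreatest := Finset.isGreatest_max' _ hne
  rw [Finset.coe_filter_univ] at hgreatest
  exact ⟨_, hgreatest⟩

theorem val_runOf_of_adjacent {i k : Fin C.length} (hik : (i : ℕ) + 1 = k) :
    (runOf C k : ℕ) = runOf C i + if C.get i ≤ C.get k then 0 else 1 := by
  obtain ⟨k, hk⟩ := k
  obtain rfl : (i : ℕ) + 1 = k := hik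
  exact runIndex_succ hk

theorem runOf_lt_iff_of_adjacent {i k : Fin C.length} (hik : (i : ℕ) + 1 = k) :
    runOf C i < runOf C k ↔ C.get k < C.get i := by
  rw [Fin.lt_def, val_runOf_of_adjacent hik, lt_add_iff_pos_right]
  split_ifs with h
  · exact iff_of_false (lt_irrefl 0) h.not_gt
  · exact iff_of_true one_pos (not_le.mp h)

theorem monotone_of_adjacent {d : ℕ} {β : Type*} [Preorder β] {g : Fin d → β}
    (hg : ∀ i k : Fin d, (i : ℕ) + 1 = k → g i ≤ g k) : Monotone g := by
  cases d with
  | zero => exact fun i => i.elim0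
  | succ d => exact Fin.monotone_iff_le_succ.mpr fun i => hg _ _ rfl

theorem monotone_toLex_runOf (C : List ℕ) : Monotone fun i => toLex (runOf C i, C.get i) := by
  refine monotone_of_adjacent fun i k hik => Prod.Lex.toLex_le_toLex.mpr ?_
  by_cases hlt : C.get k < C.get i
  · exact Or.inl ((runOf_lt_iff_of_adjacent hik).mpr hlt)
  · refine Or.inr ⟨?_, not_lt.mp hlt⟩
    rw [Fin.ext_iff, val_runOf_of_adjacent hik, if_pos (not_lt.mp hlt), add_zero]

end Runs

/-! ### Bumps of shuffles -/

section Bump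

variable {n : ℕ} {C : List ℕ} {a b c : Fin n → ℕ}

theorem monotone_toLex_comp_runOf {ι : Fin (runsWeak C).length → Fin n} (hι : StrictMono ι) :
    Monotone fun i => toLex ((ι ∘ runOf C) i, C.get i) := fun _ _ hik =>
  Prod.Lex.toLex_le_toLex.mpr <| (Prod.Lex.toLex_le_toLex.mp (monotone_toLex_runOf C hik)).imp
    (fun h => hι h) (And.imp_left (congrArg ι))

theorem monotone_runOf (C : List ℕ) : Monotone (runOf C) := fun _ _ hik =>
  (Prod.Lex.toLex_le_toLex.mp (monotone_toLex_runOf C hik)).elim le_of_lt fun h => h.1.le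

/-- Moving every letter of a run to the position of its last letter keeps a sequence compatible. -/
theorem Compat.exists_le_comp_runOf {m : ℕ → ℕ} (hm : Antitone m) {γ : Fin C.length → Fin n}
    (hγ : Compat (fun i => m (C.get i)) C.get γ) :
    ∃ ι : Fin (runsWeak C).length → Fin n, StrictMono ι ∧ γ ≤ ι ∘ runOf C ∧
      Compat (fun i => m (C.get i)) C.get (ι ∘ runOf C) := by
  choose t ht using exists_isGreatest_runOf_eq (C := C)
  have hle : ∀ i, i ≤ t (runOf C i) := fun i => (ht _).2 rfl
  have hadj : ∀ i k : Fin C.length, (i : ℕ) + 1 = k → runOf C i < runOf C k → γ i < γ k :=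
    fun i k hik hlt => by
      have hik' : i ≤ k := Fin.le_def.mpr (by omega)
      exact (hγ.monotone hik').lt_of_ne fun heq =>
        (hγ.le_of_eq hik' heq).not_gt ((runOf_lt_iff_of_adjacent hik).mp hlt)
  have hι : StrictMono (γ ∘ t) := fun k k' hk =>
    lt_of_lt_of_adjacent hγ.monotone (monotone_runOf C) hadj
      (((ht k).1.trans_lt hk).trans_eq (ht k').1.symm)
  have hletter : ∀ i, C.get i ≤ C.get (t (runOf C i)) := fun i =>
    ((Prod.Lex.toLex_le_toLex.mp (monotone_toLex_runOf C (hle i))).resolve_left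
      fun hlt => hlt.ne' (ht _).1).2
  exact ⟨γ ∘ t, hι, fun i => hγ.monotone (hle i), monotone_toLex_comp_runOf hι,
    fun i => (hγ.2 _).trans (hm (hletter i))⟩

theorem spread_card_eq_contentOn {κ : Type*} {l : ℕ} (ι : Fin l → Fin n) (r : κ → Fin l)
    (O : Finset κ) :
    spread ι (fun k => (O.filter fun i => r i = k).card) = contentOn O (ι ∘ r) := by
  funext j
  rw [spread, contentOn, Finset.card_eq_sum_card_fiberwise (f := r) (t := Finset.univ)
    fun _ _ => Finset.mem_coe.mpr (Finset.mem_univ _)]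
  refine Finset.sum_congr rfl fun k _ => ?_
  rw [Finset.filter_filter]
  split_ifs with h
  · refine congrArg Finset.card (Finset.filter_congr fun i _ => ⟨?_, And.right⟩)
    rintro rfl
    exact ⟨h, rfl⟩
  · refine (Finset.card_eq_zero.mpr (Finset.filter_eq_empty_iff.mpr ?_)).symm
    rintro i - ⟨hj, rfl⟩
    exact h hj

theorem spread_length_filter_runs (p : ℕ → Prop) [DecidablePred p]
    (ι : Fin (runsWeak C).length → Fin n) :
    spread ι (fun k => (((runsWeak C).get k).filter fun z => decide (p z)).length) =
      contentOn (Finset.univ.filter fun i => p (C.get i)) (ι ∘ runOf C) := by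
  simp only [← spread_card_eq_contentOn, card_filter_runOf]

theorem spread_runLen (ι : Fin (runsWeak C).length → Fin n) :
    spread ι (runLen C) = content (ι ∘ runOf C) := by
  have h := spread_length_filter_runs (fun _ => True) ι
  simp only [decide_true, List.filter_true, Finset.filter_true] at h
  exact h

theorem dominates_spread_iff {p : ℕ → Prop} [DecidablePred p] {ℓ : Fin n → ℕ} {m : ℕ → ℕ}
    (hm : Antitone m) (hℓ : Antitone ℓ) (hmℓ : ∀ i, m (ℓ i) = i)
    (hC : C.filter (fun z => decide (p z)) = powerWord a ℓ)
    {ι : Fin (runsWeak C).length → Fin n} (hι : Monotone ι) :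
    Dominates (spread ι fun k => (((runsWeak C).get k).filter fun z => decide (p z)).length) a ↔
      ∀ i, p (C.get i) → ((ι ∘ runOf C) i : ℕ) ≤ m (C.get i) := by
  have hpw := pairwise_powerWord a hℓ
  rw [← hC, List.pairwise_filter, List.pairwise_iff_get] at hpw
  have hmono : MonotoneOn (fun i => m (C.get i)) (Finset.univ.filter fun i => p (C.get i)) := by
    intro i hi k hk hik
    rcases hik.eq_or_lt with rfl | hik
    · exact le_rfl
    · exact hm (hpw i k hik (by simpa using hi) (by simpa using hk))
  rw [spread_length_filter_runs,
    dominates_contentOn_iff ((hι.comp (monotone_runOf C)).monotoneOn _) hmono fun j _ => ?_]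
  · simp only [Finset.mem_filter_univ]
  · rw [← countP_powerWord a hmℓ, ← hC, List.countP_filter, Finset.filter_filter,
      card_filter_get_eq_countP C fun z => p z ∧ m z < j]
    refine List.countP_congr fun z _ => ?_
    simp [and_comm]

theorem compat_comp_runOf_iff (hC : C ∈ shuffles (wordA a) (wordB b))
    {ι : Fin (runsWeak C).length → Fin n} (hι : StrictMono ι) :
    Compat (fun i => letterBound n (C.get i)) C.get (ι ∘ runOf C) ↔
      Dominates (spread ι (runCountA C)) a ∧ Dominates (spread ι (runCountB C)) b := by
  have hodd : C.filter (fun z => decide (z % 2 = 1)) = wordA a :=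
    filter_of_mem_shuffles _ hC (fun z hz => by simpa using odd_of_mem_wordA hz)
      fun z hz => by simpa using even_of_mem_wordB hz
  have heven : C.filter (fun z => decide (z % 2 = 0)) = wordB b :=
    filter_of_mem_shuffles _ (shuffles_comm (wordA a) (wordB b) ▸ hC)
      (fun z hz => by simpa using even_of_mem_wordB hz)
      fun z hz => by simpa using odd_of_mem_wordA hz
  have hm := letterBound_antitone n
  refine Iff.trans ?_ (and_congr
    (dominates_spread_iff hm antitone_odd_letter letterBound_odd hodd hι.monotone)
    (dominates_spread_iff hm antitone_even_letter letterBound_even heven hι.monotone)).symm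
  refine ⟨fun h => ⟨fun i _ => h.2 i, fun i _ => h.2 i⟩, fun h =>
    ⟨monotone_toLex_comp_runOf hι, fun i => ?_⟩⟩
  exact (Nat.mod_two_eq_zero_or_one (C.get i)).elim (h.2 i) (h.1 i)

theorem dominates_spread_runLen_iff {ι ι' : Fin (runsWeak C).length → Fin n} (hι : Monotone ι)
    (hι' : Monotone ι') :
    Dominates (spread ι' (runLen C)) (spread ι (runLen C)) ↔ ι' ∘ runOf C ≤ ι ∘ runOf C := by
  rw [spread_runLen, spread_runLen,
    dominates_content_iff (hι'.comp (monotone_runOf C)) (hι.comp (monotone_runOf C))]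

theorem isBumpS_iff (hC : C ∈ shuffles (wordA a) (wordB b)) :
    IsBumpS a b C c ↔ ∃ γ : Fin C.length → Fin n,
      IsGreatest {γ | Compat (fun i => letterBound n (C.get i)) C.get γ} γ ∧ c = content γ := by
  constructor
  · rintro ⟨ι, hι, rfl, hιA, hιB, hmin⟩
    refine ⟨ι ∘ runOf C, ⟨(compat_comp_runOf_iff hC hι).mpr ⟨hιA, hιB⟩, fun γ hγ => ?_⟩,
      spread_runLen ι⟩
    obtain ⟨ι', hι', hle, hcompat⟩ := Compat.exists_le_comp_runOf (letterBound_antitone n) hγ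
    obtain ⟨hA, hB⟩ := (compat_comp_runOf_iff hC hι').mp hcompat
    exact hle.trans
      ((dominates_spread_runLen_iff hι.monotone hι'.monotone).mp (hmin ι' hι' hA hB))
  · rintro ⟨γ, ⟨hγ, hmax⟩, rfl⟩
    obtain ⟨ι, hι, hle, hcompat⟩ := Compat.exists_le_comp_runOf (letterBound_antitone n) hγ
    obtain rfl : γ = ι ∘ runOf C := le_antisymm hle (hmax hcompat)
    obtain ⟨hA, hB⟩ := (compat_comp_runOf_iff hC hι).mp hcompat
    refine ⟨ι, hι, (spread_runLen ι).symm, hA, hB, fun ι' hι' hA' hB' => ?_⟩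
    rw [← spread_runLen, dominates_spread_runLen_iff hι.monotone hι'.monotone]
    exact hmax ((compat_comp_runOf_iff hC hι').mpr ⟨hA', hB'⟩)

theorem le_val_of_strictMono {l : ℕ} {ι : Fin l → Fin n} (hι : StrictMono ι) (k : Fin l) :
    (k : ℕ) ≤ ι k := by
  obtain ⟨k, hk⟩ := k
  induction k with
  | zero => exact Nat.zero_le _
  | succ k ih =>
    exact (ih (by omega)).trans_lt (Fin.lt_def.mp (hι (Fin.mk_lt_mk.mpr k.lt_succ_self)))

theorem dominatesList_of_dominates_spread {α : Type*} {L : List α} (g : α → ℕ)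
    {ι : Fin L.length → Fin n} (hι : StrictMono ι)
    (h : Dominates (spread ι fun k => g (L.get k)) a) : DominatesList (L.map g) a := by
  intro i
  refine (h i).trans ?_
  have hL : L.map g = List.ofFn fun k => g (L.get k) := by
    conv_lhs => rw [← List.ofFn_get L, List.map_ofFn]
    rfl
  rw [hL, List.sum_take_ofFn, psum]
  simp only [spread]
  rw [Finset.sum_comm, Finset.sum_filter]
  refine Finset.sum_le_sum fun k _ => ?_
  have hk := le_val_of_strictMono hι k
  simp only [Finset.sum_ite_eq, Finset.mem_filter_univ]
  split_ifs
  · exact le_rfl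
  · omega
  · exact Nat.zero_le _
  · exact le_rfl

theorem IsBumpS.dominatesList (h : IsBumpS a b C c) :
    DominatesList ((runsWeak C).map fun r => (r.filter (fun z => z % 2 = 1)).length) a ∧
      DominatesList ((runsWeak C).map fun r => (r.filter (fun z => z % 2 = 0)).length) b := by
  obtain ⟨ι, hι, _, hA, hB, _⟩ := h
  unfold runCountA at hA
  unfold runCountB at hB
  exact ⟨dominatesList_of_dominates_spread _ hι hA, dominatesList_of_dominates_spread _ hι hB⟩

/-- The slide product as a formal sum of weak compositions, one for each shuffle with a bump. -/
noncomputable def slideProd (a b : Fin n → ℕ) : (Fin n → ℕ) →₀ ℤ :=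
  ((shuffles (wordA a) (wordB b)).map fun C =>
    compatTerm (fun i => letterBound n (C.get i)) C.get).sum

theorem sum_map_ite_one_zero {α R : Type*} [AddCommMonoidWithOne R] (S : Multiset α) (p : α → Prop)
    [DecidablePred p] :
    (S.map fun x => if p x then (1 : R) else 0).sum = (Multiset.card (S.filter p) : R) := by
  induction S using Multiset.induction with
  | empty => simp
  | cons x S ih => by_cases h : p x <;> simp [h, ih, add_comm]

theorem slideProd_apply (a b c : Fin n → ℕ) : slideProd a b c = slideMult a b c := by
  have hterm : ∀ C ∈ shuffles (wordA a) (wordB b),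
      compatTerm (fun i => letterBound n (C.get i)) C.get c = if IsBumpS a b C c then 1 else 0 :=
    fun C hC => (compatTerm_apply _ _ _).trans (if_congr (isBumpS_iff hC).symm rfl rfl)
  have hfilter : ∀ C, (DominatesList _ a ∧ DominatesList _ b ∧ IsBumpS a b C c) ↔
      IsBumpS a b C c := fun C =>
    ⟨fun h => h.2.2, fun h => ⟨h.dominatesList.1, h.dominatesList.2, h⟩⟩
  simp only [slideMult, hfilter]
  rw [slideProd, ← Finsupp.applyAddHom_apply, map_multiset_sum, Multiset.map_map]
  exact (congrArg Multiset.sum (Multiset.map_congr rfl hterm)).trans (sum_map_ite_one_zero _ _)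

theorem linearCombination_slideProd (a b : Fin n → ℕ) :
    Finsupp.linearCombination ℤ slideF (slideProd a b) = slideF a * slideF b := by
  rw [slideF_mul_slideF_eq_sum_shuffles, slideProd, map_multiset_sum, Multiset.map_map]
  exact congrArg Multiset.sum (Multiset.map_congr rfl fun C _ =>
    linearCombination_compatTerm fun i k hik => letterBound_antitone n hik)

end Bump

/-! ### Reduced words -/

section ReducedWords

variable {k : ℕ} {l : List ℕ}

theorem wordPerm_cons (k : ℕ) (l : List ℕ) :
    wordPerm (k :: l) = wordPerm l * Equiv.swap k (k + 1) := by
  simp [wordPerm, List.prod_append]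

/-- The exchange condition for reflections. -/
theorem exists_wordPerm_eq_mul_swap {p q : ℕ} (hpq : p < q) (h : wordPerm l q < wordPerm l p) :
    ∃ l', l'.length + 1 = l.length ∧ wordPerm l' = wordPerm l * Equiv.swap p q := by
  induction l generalizing p q with
  | nil => exact absurd h hpq.not_gt
  | cons k l ih =>
    rw [wordPerm_cons] at h ⊢
    by_cases hk : p = k ∧ q = k + 1
    · obtain ⟨rfl, rfl⟩ := hk
      exact ⟨l, rfl, by rw [mul_assoc, Equiv.swap_mul_self, mul_one]⟩
    · have hlt : Equiv.swap k (k + 1) p < Equiv.swap k (k + 1) q := by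
        simp only [Equiv.swap_apply_def]
        split_ifs <;> omega
      obtain ⟨l', hlength, hperm⟩ := ih hlt h
      refine ⟨k :: l', by rw [List.length_cons, List.length_cons, hlength], ?_⟩
      rw [wordPerm_cons, hperm, Equiv.swap_apply_apply, Equiv.swap_inv]
      simp [mul_assoc]

theorem IsReducedWord.tail (h : IsReducedWord (k :: l)) : IsReducedWord l := fun l' hl' =>
  Nat.succ_le_succ_iff.mp (h (k :: l') (by rw [wordPerm_cons, wordPerm_cons, hl']))

theorem IsReducedWord.wordPerm_succ_lt (h : IsReducedWord (k :: l)) :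
    wordPerm (k :: l) (k + 1) < wordPerm (k :: l) k := by
  rw [wordPerm_cons, Equiv.Perm.mul_apply, Equiv.Perm.mul_apply, Equiv.swap_apply_left,
    Equiv.swap_apply_right]
  by_contra! hle
  obtain ⟨l', hlength, hperm⟩ := exists_wordPerm_eq_mul_swap k.lt_succ_self
    (hle.lt_of_ne fun heq => k.succ_ne_self ((wordPerm l).injective heq))
  have hmin := h l' (by rw [hperm, wordPerm_cons])
  rw [List.length_cons] at hmin
  omega

theorem IsReducedWord.isChain_ne (h : IsReducedWord l) : l.IsChain (· ≠ ·) := by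
  induction l with
  | nil => exact List.isChain_nil
  | cons k l ih =>
    cases l with
    | nil => exact List.isChain_singleton _
    | cons m l =>
      refine List.isChain_cons_cons.mpr ⟨?_, ih h.tail⟩
      rintro rfl
      have hmin := h l (by
        rw [wordPerm_cons, wordPerm_cons, mul_assoc, Equiv.swap_mul_self, mul_one])
      simp at hmin

theorem IsReducedWord.succ_lt_of_mem (h : IsReducedWord l) {N : ℕ}
    (hN : ∀ i, N ≤ i → wordPerm l i = i) (hk : k ∈ l) : k + 1 < N := by
  induction l with
  | nil => simp at hk
  | cons m l ih =>
    have hm : m + 1 < N := by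
      by_contra! hle
      have hdesc : m + 1 < wordPerm (m :: l) m := hN (m + 1) hle ▸ h.wordPerm_succ_lt
      have hfix : wordPerm (m :: l) m = m :=
        (wordPerm (m :: l)).injective (hN _ (hle.trans hdesc.le))
      omega
    rcases List.mem_cons.mp hk with rfl | hk
    · exact hm
    · refine ih h.tail (fun i hi => ?_) hk
      have hfix := hN i hi
      rwa [wordPerm_cons, Equiv.Perm.mul_apply,
        Equiv.swap_apply_of_ne_of_ne (by omega) (by omega)] at hfix

theorem IsReducedWord.ne_of_adjacent {d : ℕ} {x : Fin d → ℕ}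
    (h : IsReducedWord (List.ofFn x).reverse) {i k : Fin d} (hik : (i : ℕ) + 1 = k) :
    x i ≠ x k := by
  have hne := List.isChain_iff_getElem.mp (List.isChain_reverse.mp h.isChain_ne) i
    (by rw [List.length_ofFn]; omega)
  simp only [List.getElem_ofFn, hik] at hne
  exact hne.symm

theorem IsReducedWord.wordPerm_succ_lt_last {d : ℕ} {x : Fin d → ℕ}
    (h : IsReducedWord (List.ofFn x).reverse) {i : Fin d} (hi : (i : ℕ) + 1 = d) :
    wordPerm (List.ofFn x).reverse (x i + 1) < wordPerm (List.ofFn x).reverse (x i) := by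
  obtain _ | d := d
  · exact i.elim0
  · obtain rfl : i = Fin.last d := Fin.ext (by simpa using hi)
    rw [List.ofFn_succ', List.concat_eq_append, List.reverse_append, List.reverse_singleton,
      List.singleton_append] at h ⊢
    exact h.wordPerm_succ_lt

end ReducedWords

/-! ### Pipe dreams as compatible sequences -/

section PipeDreams

open OrderDual

/-- The reading order of the crosses of a pipe dream: rows from top to bottom, each row from left
to right. -/
def ReadBefore (p q : ℕ × ℕ) : Prop := q.1 < p.1 ∨ p.1 = q.1 ∧ p.2 < q.2

theorem ReadBefore.ne {p q : ℕ × ℕ} (h : ReadBefore p q) : p ≠ q := by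
  rintro rfl
  exact h.elim (lt_irrefl _) fun h => lt_irrefl _ h.2

theorem ReadBefore.asymm {p q : ℕ × ℕ} (h : ReadBefore p q) : ¬ReadBefore q p := by
  unfold ReadBefore at *
  omega

/-- The crosses of a pipe dream, in reading order; `readWord` records their antidiagonals. -/
def readCells (P : Finset (ℕ × ℕ)) : List (ℕ × ℕ) :=
  ((List.range (P.sup Prod.fst + 1)).reverse).flatMap
    (fun i => ((List.range (P.sup Prod.snd + 1)).filter (fun j => decide ((i, j) ∈ P))).map
      (fun j => (i, j)))

theorem map_readCells (P : Finset (ℕ × ℕ)) :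
    (readCells P).map (fun p => p.1 + p.2) = readWord P := by
  simp only [readCells, readWord, List.map_flatMap, List.map_map]
  rfl

theorem mem_readCells {P : Finset (ℕ × ℕ)} {p : ℕ × ℕ} : p ∈ readCells P ↔ p ∈ P := by
  obtain ⟨i, j⟩ := p
  simp only [readCells, List.mem_flatMap, List.mem_reverse, List.mem_range, List.mem_map,
    List.mem_filter, decide_eq_true_eq, Prod.mk.injEq]
  constructor
  · rintro ⟨i, -, j, ⟨-, h⟩, rfl, rfl⟩
    exact h
  · exact fun h => ⟨i, Nat.lt_succ_of_le (Finset.le_sup (f := Prod.fst) h), j,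
      ⟨Nat.lt_succ_of_le (Finset.le_sup (f := Prod.snd) h), h⟩, rfl, rfl⟩

theorem pairwise_readCells (P : Finset (ℕ × ℕ)) : (readCells P).Pairwise ReadBefore := by
  rw [readCells, List.pairwise_flatMap]
  refine ⟨fun i _ => ?_, ?_⟩
  · rw [List.pairwise_map]
    exact (List.pairwise_lt_range.filter _).imp fun h => Or.inr ⟨rfl, h⟩
  · rw [List.pairwise_reverse]
    refine List.pairwise_lt_range.imp fun h p hp q hq => Or.inl ?_
    obtain ⟨_, -, rfl⟩ := List.mem_map.mp hp
    obtain ⟨_, -, rfl⟩ := List.mem_map.mp hq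
    exact h

theorem readCells_eq {P : Finset (ℕ × ℕ)} {L : List (ℕ × ℕ)} (hL : L.Pairwise ReadBefore)
    (hmem : ∀ p, p ∈ L ↔ p ∈ P) : readCells P = L := by
  have hperm : (readCells P).Perm L :=
    (List.perm_ext_iff_of_nodup ((pairwise_readCells P).imp ReadBefore.ne)
      (hL.imp ReadBefore.ne)).mpr fun p => mem_readCells.trans (hmem p).symm
  exact hperm.eq_of_pairwise (fun p q _ _ h h' => absurd h' h.asymm) (pairwise_readCells P) hL

variable {n d : ℕ} {w : Fin d → ℕ} {γ : Fin d → Fin n}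

/-- Sequences of rows `γ` which, together with the letters `w`, are those of the crosses of a pipe
dream. Crosses are indexed against the reading order, so the reading word is `w` reversed; the
order on letters is dualized because letters increase along the reading order of a row. -/
abbrev RowCompat (w : Fin d → ℕ) (γ : Fin d → Fin n) : Prop :=
  Compat w (fun i => toDual (w i)) γ

/-- The cross in row `γ i` which records the letter `w i`; the column is a genuine difference when
`RowCompat w γ`. -/
def cellAt (w : Fin d → ℕ) (γ : Fin d → Fin n) (i : Fin d) : ℕ × ℕ := (γ i, w i - γ i)

/-- The pipe dream whose crosses lie in the rows `γ` and record the letters `w`. -/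
def cellsOf (w : Fin d → ℕ) (γ : Fin d → Fin n) : Finset (ℕ × ℕ) :=
  Finset.univ.image (cellAt w γ)

theorem mem_cellsOf {p : ℕ × ℕ} : p ∈ cellsOf w γ ↔ ∃ i, cellAt w γ i = p := by simp [cellsOf]

theorem strictMono_of_adjacent_ne {β : Type*} [PartialOrder β] {g : Fin d → β} (hg : Monotone g)
    (hne : ∀ i k : Fin d, (i : ℕ) + 1 = k → g i ≠ g k) : StrictMono g := by
  cases d with
  | zero => exact fun i => i.elim0
  | succ d =>
    exact Fin.strictMono_iff_lt_succ.mpr fun i =>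
      (hg i.castSucc_lt_succ.le).lt_of_ne (hne _ _ rfl)

theorem readBefore_cellAt (hw : ∀ i k : Fin d, (i : ℕ) + 1 = k → w i ≠ w k) (hγ : RowCompat w γ)
    {i k : Fin d} (hik : i < k) : ReadBefore (cellAt w γ k) (cellAt w γ i) := by
  have hstrict : StrictMono fun i => toLex (γ i, toDual (w i)) :=
    strictMono_of_adjacent_ne hγ.1 fun i k hik h =>
      hw i k hik (toDual_inj.mp (Prod.ext_iff.mp (toLex_inj.mp h)).2)
  rcases Prod.Lex.toLex_lt_toLex.mp (hstrict hik) with hlt | ⟨heq, hlt⟩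
  · exact Or.inl hlt
  · have heq : (γ i : ℕ) = γ k := congrArg Fin.val heq
    refine Or.inr ⟨heq.symm, ?_⟩
    rw [cellAt, cellAt, heq]
    exact Nat.sub_lt_sub_right (hγ.2 k) (toDual_lt_toDual.mp hlt)

theorem readCells_cellsOf (hw : ∀ i k : Fin d, (i : ℕ) + 1 = k → w i ≠ w k)
    (hγ : RowCompat w γ) : readCells (cellsOf w γ) = (List.ofFn (cellAt w γ)).reverse := by
  refine readCells_eq ?_ fun p => by rw [List.mem_reverse, List.mem_ofFn, mem_cellsOf]
  rw [List.pairwise_reverse, List.pairwise_ofFn]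
  exact fun i k hik => readBefore_cellAt hw hγ hik

theorem readWord_cellsOf (hw : ∀ i k : Fin d, (i : ℕ) + 1 = k → w i ≠ w k)
    (hγ : RowCompat w γ) : readWord (cellsOf w γ) = (List.ofFn w).reverse := by
  rw [← map_readCells, readCells_cellsOf hw hγ, List.map_reverse, List.map_ofFn]
  exact congrArg (fun x => (List.ofFn x).reverse) (funext fun i => Nat.add_sub_of_le (hγ.2 i))

theorem injOn_cellsOf (hw : ∀ i k : Fin d, (i : ℕ) + 1 = k → w i ≠ w k) :
    Set.InjOn (cellsOf (n := n) w) {γ | RowCompat w γ} := fun γ hγ δ hδ h => by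
  have hcells := congrArg readCells h
  rw [readCells_cellsOf hw hγ, readCells_cellsOf hw hδ, List.reverse_inj, List.ofFn_inj] at hcells
  exact funext fun i => Fin.ext (Prod.ext_iff.mp (congrFun hcells i)).1

theorem wtFin_cellsOf (hw : ∀ i k : Fin d, (i : ℕ) + 1 = k → w i ≠ w k)
    (hγ : RowCompat w γ) : wtFin n (cellsOf w γ) = content γ := by
  have hinj : Function.Injective (cellAt w γ) := fun i k h => by
    by_contra hne
    rcases lt_or_gt_of_ne hne with hik | hki
    · exact (readBefore_cellAt hw hγ hik).ne h.symm
    · exact (readBefore_cellAt hw hγ hki).ne h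
  funext j
  rw [wtFin, rowWt, cellsOf, Finset.filter_image, Finset.card_image_of_injective _ hinj, content,
    contentOn]
  simp only [cellAt, Fin.ext_iff]
  congr

theorem exists_eq_cellsOf {P : Finset (ℕ × ℕ)} (hP : ∀ p ∈ P, p.1 < n)
    (hword : readWord P = (List.ofFn w).reverse) :
    ∃ γ : Fin d → Fin n, RowCompat w γ ∧ cellsOf w γ = P := by
  have hlength : (readCells P).reverse.length = d := by
    rw [List.length_reverse, ← List.length_map (fun p => p.1 + p.2), map_readCells, hword,
      List.length_reverse, List.length_ofFn]
  obtain ⟨g, hg⟩ : ∃ g : Fin d → ℕ × ℕ, (readCells P).reverse = List.ofFn g := by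
    subst hlength
    exact ⟨(readCells P).reverse.get, (List.ofFn_get _).symm⟩
  have hmem : ∀ p, p ∈ P ↔ ∃ i, g i = p := fun p => by
    rw [← mem_readCells, ← List.mem_reverse, hg, List.mem_ofFn]
  have hletter : ∀ i, (g i).1 + (g i).2 = w i := by
    rw [← map_readCells, ← List.reverse_eq_iff, ← List.map_reverse, hg, List.map_ofFn,
      List.ofFn_inj] at hword
    exact congrFun hword
  have hread : ∀ i k, i < k → ReadBefore (g k) (g i) := by
    have hpw := pairwise_readCells P
    rw [← List.pairwise_reverse, hg, List.pairwise_ofFn] at hpw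
    exact fun i k hik => hpw hik
  refine ⟨fun i => ⟨(g i).1, hP _ ((hmem _).mpr ⟨i, rfl⟩)⟩,
    ⟨monotone_iff_forall_lt.mpr fun i k hik => Prod.Lex.toLex_le_toLex.mpr ?_,
      fun i => hletter i ▸ Nat.le_add_right _ _⟩, ?_⟩
  · refine (hread i k hik).imp id fun ⟨hrow, hcol⟩ => ⟨Fin.ext hrow.symm, ?_⟩
    rw [toDual_le_toDual, ← hletter, ← hletter, hrow]
    exact Nat.add_le_add_left hcol.le _
  · ext p
    rw [hmem, mem_cellsOf]
    refine exists_congr fun i => ?_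
    rw [cellAt, ← hletter, Nat.add_sub_cancel_left]

/-- The quasi-Yamanouchi condition on a set of crosses, without reference to a permutation. -/
def IsQuasiYamanouchi (P : Finset (ℕ × ℕ)) : Prop :=
  ∀ i j : ℕ, (i, j) ∈ P → (∀ j', (i, j') ∈ P → j ≤ j') →
    (j = 0 ∨ ∃ j', (i + 1, j') ∈ P ∧ j ≤ j')

theorem isQuasiYamanouchi_cellsOf_iff (hγ : RowCompat w γ) :
    IsQuasiYamanouchi (cellsOf w γ) ↔ ∀ i, (∀ k, i < k → γ i < γ k) →
      w i = γ i ∨ ∃ k, (γ k : ℕ) = γ i + 1 ∧ w i < w k := by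
  have hmem : ∀ {r j}, (r, j) ∈ cellsOf w γ ↔ ∃ k, (γ k : ℕ) = r ∧ w k = r + j := fun {r j} => by
    refine mem_cellsOf.trans (exists_congr fun k => ?_)
    have hk := hγ.2 k
    rw [cellAt, Prod.mk.injEq]
    omega
  have hcell : ∀ i, w i = γ i + (w i - γ i) := fun i => (Nat.add_sub_of_le (hγ.2 i)).symm
  constructor
  · intro h i hlast
    have hwest : ∀ j', ((γ i : ℕ), j') ∈ cellsOf w γ → w i - γ i ≤ j' := fun j' hj' => by
      obtain ⟨k, hk, hwk⟩ := hmem.mp hj'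
      have hki : k ≤ i := not_lt.mp fun hik => (hlast k hik).ne' (Fin.ext hk)
      have hle : w i ≤ w k := toDual_le_toDual.mp (hγ.le_of_eq hki (Fin.ext hk))
      omega
    refine (h (γ i) (w i - γ i) (hmem.mpr ⟨i, rfl, hcell i⟩) hwest).imp (fun h₀ => ?_) ?_
    · rw [hcell i, h₀, add_zero]
    · rintro ⟨j', hj', hle⟩
      obtain ⟨k, hk, hwk⟩ := hmem.mp hj'
      exact ⟨k, hk, by have := hcell i; omega⟩
  · intro h r j hj hwest
    obtain ⟨i₀, hi₀, -⟩ := hmem.mp hj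
    obtain ⟨i, hi, hmax⟩ := (Set.toFinite {i | (γ i : ℕ) = r}).exists_maximal ⟨i₀, hi₀⟩
    obtain rfl : (γ i : ℕ) = r := hi
    have hlast : ∀ k, i < k → γ i < γ k := fun k hik => (hγ.monotone hik.le).lt_of_ne fun heq =>
      hik.not_ge (hmax (congrArg Fin.val heq.symm) hik.le)
    have hle : j ≤ w i - γ i := hwest _ (hmem.mpr ⟨i, rfl, hcell i⟩)
    refine (h i hlast).imp (fun h₀ => by omega) ?_
    rintro ⟨k, hk, hlt⟩
    exact ⟨w k - γ k, hmem.mpr ⟨k, hk, hk ▸ hcell k⟩, by omega⟩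

/-- Both sides say that no cross can move up along its antidiagonal without changing the reading
word. -/
theorem isQuasiYamanouchi_cellsOf_iff_isGreatest
    (hlast : ∀ i : Fin d, (i : ℕ) + 1 = d → w i < n) (hγ : RowCompat w γ) :
    IsQuasiYamanouchi (cellsOf w γ) ↔ IsGreatest {γ : Fin d → Fin n | RowCompat w γ} γ := by
  rw [isQuasiYamanouchi_cellsOf_iff hγ, isGreatest_compat_iff hγ]
  constructor
  · intro h i x hix hxw
    suffices ∃ k, i < k ∧ toLex (γ k, toDual (w k)) < toLex (x, toDual (w i)) by
      obtain ⟨k, hik, hlt⟩ := this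
      have hle : (⟨i + 1, by omega⟩ : Fin d) ≤ k := Fin.le_def.mpr (Fin.lt_def.mp hik)
      exact ⟨_, rfl, (hγ.1 hle).trans_lt hlt⟩
    by_cases hblock : ∀ k, i < k → γ i < γ k
    · obtain hw | ⟨k, hk, hlt⟩ := h i hblock
      · exact absurd hxw (hw ▸ (Fin.lt_def.mp hix).not_ge)
      · have hkx : γ k ≤ x := Fin.le_def.mpr (hk ▸ Fin.lt_def.mp hix)
        exact ⟨k, hγ.monotone.reflect_lt (Fin.lt_def.mpr (by omega)),
          Prod.Lex.toLex_lt_toLex.mpr (hkx.lt_or_eq.imp_right fun heq => ⟨heq, hlt⟩)⟩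
    · push Not at hblock
      obtain ⟨k, hik, hle⟩ := hblock
      exact ⟨k, hik, Prod.Lex.toLex_lt_toLex.mpr (Or.inl (hle.trans_lt hix))⟩
  · intro h i hblock
    refine or_iff_not_imp_left.mpr fun hne => ?_
    have hlt : (γ i : ℕ) < w i := (hγ.2 i).lt_of_ne' hne
    have hn : (γ i : ℕ) + 1 < n := by
      by_cases hd : (i : ℕ) + 1 < d
      · exact (Nat.succ_le_of_lt (hblock ⟨i + 1, hd⟩ (Nat.lt_succ_self _))).trans_lt (Fin.isLt _)
      · exact (Nat.succ_le_of_lt hlt).trans_lt (hlast i (by omega))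
    obtain ⟨k, hik, hk⟩ := h i ⟨γ i + 1, hn⟩ (Nat.lt_succ_self _) hlt
    have hle : (⟨γ i + 1, hn⟩ : Fin n) ≤ γ k := hblock k (Fin.lt_def.mpr (by omega))
    obtain ⟨heq, hwk⟩ := (Prod.Lex.toLex_lt_toLex.mp hk).resolve_left hle.not_gt
    exact ⟨k, congrArg Fin.val heq, hwk⟩

end PipeDreams

/-! ### The slide expansion of Schubert polynomials -/

theorem finsum_mem_eq_finsum_fiber {α β M : Type*} [AddCommMonoid M] {s : Set α} (hs : s.Finite)
    (g : α → β) (f : α → M) :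
    ∑ᶠ a ∈ s, f a = ∑ᶠ b, ∑ᶠ a ∈ {a | a ∈ s ∧ g a = b}, f a := by
  lift s to Finset α using hs
  have hfiber : ∀ b, {a | a ∈ (s : Set α) ∧ g a = b} = ↑(s.filter fun a => g a = b) := fun b =>
    (Finset.coe_filter _ _).symm
  simp only [hfiber, finsum_mem_coe_finset]
  rw [← Finset.sum_fiberwise_of_maps_to fun a ha => Finset.mem_image_of_mem g ha,
    finsum_eq_sum_of_support_subset]
  intro b hb
  obtain ⟨a, ha, -⟩ := Finset.exists_ne_zero_of_sum_ne_zero hb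
  obtain ⟨has, rfl⟩ := Finset.mem_filter.mp ha
  exact Finset.mem_coe.mpr (Finset.mem_image_of_mem g has)

section Schubert

open OrderDual

variable {n d : ℕ} {w : Equiv.Perm ℕ} {x : Fin d → ℕ}

theorem lt_of_apply_succ_lt (hd : ∀ i : ℕ, n ≤ i + 1 → w i < w (i + 1)) {k : ℕ}
    (hk : w (k + 1) < w k) : k < n := by
  by_contra! h
  exact (hd k (h.trans k.le_succ)).not_gt hk

theorem IsPD.fst_lt (hd : ∀ i : ℕ, n ≤ i + 1 → w i < w (i + 1)) {P : Finset (ℕ × ℕ)}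
    (hP : IsPD w P) {p : ℕ × ℕ} (hp : p ∈ P) : p.1 < n := by
  obtain ⟨hperm, hred⟩ := hP
  rw [← map_readCells] at hperm hred
  have hpw := pairwise_readCells P
  have hp := mem_readCells.mpr hp
  cases hL : readCells P with
  | nil => simp [hL] at hp
  | cons q L =>
    rw [hL] at hperm hred hpw hp
    have hq : q.1 + q.2 < n := lt_of_apply_succ_lt hd (hperm ▸ hred.wordPerm_succ_lt)
    rcases List.mem_cons.mp hp with rfl | hp
    · omega
    · rcases (List.pairwise_cons.mp hpw).1 p hp with h | h <;> omega

theorem finite_setOf_isPD (hw : ∃ N, ∀ i, N ≤ i → w i = i) : {P | IsPD w P}.Finite := by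
  obtain ⟨N, hN⟩ := hw
  refine (Finset.finite_toSet (Finset.range N ×ˢ Finset.range N).powerset).subset fun P hP => ?_
  refine Finset.mem_coe.mpr (Finset.mem_powerset.mpr fun p hp => ?_)
  have hletter : p.1 + p.2 ∈ readWord P :=
    map_readCells P ▸ List.mem_map_of_mem (mem_readCells.mpr hp)
  have hlt := hP.2.succ_lt_of_mem (by rwa [hP.1]) hletter
  rw [Finset.mem_product, Finset.mem_range, Finset.mem_range]
  omega

theorem finite_setOf_isQPD (hw : ∃ N, ∀ i, N ≤ i → w i = i) : {Q | IsQPD w Q}.Finite :=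
  (finite_setOf_isPD hw).subset fun _ hQ => hQ.1

theorem isPD_and_readWord_eq_iff (hd : ∀ i : ℕ, n ≤ i + 1 → w i < w (i + 1))
    (hperm : wordPerm (List.ofFn x).reverse = w) (hred : IsReducedWord (List.ofFn x).reverse)
    {P : Finset (ℕ × ℕ)} :
    IsPD w P ∧ readWord P = (List.ofFn x).reverse ↔
      ∃ γ : Fin d → Fin n, RowCompat x γ ∧ cellsOf x γ = P := by
  constructor
  · exact fun ⟨hP, hword⟩ => exists_eq_cellsOf (fun p hp => hP.fst_lt hd hp) hword
  · rintro ⟨γ, hγ, rfl⟩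
    rw [IsPD, readWord_cellsOf (fun _ _ => hred.ne_of_adjacent) hγ]
    exact ⟨⟨hperm, hred⟩, rfl⟩

theorem isQPD_and_readWord_eq_iff (hd : ∀ i : ℕ, n ≤ i + 1 → w i < w (i + 1))
    (hperm : wordPerm (List.ofFn x).reverse = w) (hred : IsReducedWord (List.ofFn x).reverse)
    {Q : Finset (ℕ × ℕ)} :
    IsQPD w Q ∧ readWord Q = (List.ofFn x).reverse ↔
      ∃ γ : Fin d → Fin n, IsGreatest {γ | RowCompat x γ} γ ∧ cellsOf x γ = Q := by
  have hqy : ∀ γ : Fin d → Fin n, RowCompat x γ →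
      (IsQuasiYamanouchi (cellsOf x γ) ↔ IsGreatest {γ | RowCompat x γ} γ) := fun γ hγ =>
    isQuasiYamanouchi_cellsOf_iff_isGreatest
      (fun i hi => lt_of_apply_succ_lt hd (hperm ▸ hred.wordPerm_succ_lt_last hi)) hγ
  change (IsPD w Q ∧ IsQuasiYamanouchi Q) ∧ _ ↔ _
  rw [and_right_comm, isPD_and_readWord_eq_iff hd hperm hred]
  constructor
  · rintro ⟨⟨γ, hγ, rfl⟩, hQ⟩
    exact ⟨γ, (hqy γ hγ).mp hQ, rfl⟩
  · rintro ⟨γ, hγ, rfl⟩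
    exact ⟨⟨γ, hγ.1, rfl⟩, (hqy γ hγ.1).mpr hγ⟩

theorem finsum_isPD_readWord_eq_compatPoly (hd : ∀ i : ℕ, n ≤ i + 1 → w i < w (i + 1))
    (hperm : wordPerm (List.ofFn x).reverse = w) (hred : IsReducedWord (List.ofFn x).reverse) :
    ∑ᶠ P ∈ {P | IsPD w P ∧ readWord P = (List.ofFn x).reverse},
        MvPolynomial.monomial (Finsupp.equivFunOnFinite.symm (wtFin n P)) (1 : ℤ) =
      compatPoly n x fun i => toDual (x i) := by
  have hx : ∀ i k : Fin d, (i : ℕ) + 1 = k → x i ≠ x k := fun _ _ => hred.ne_of_adjacent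
  have himage : {P | IsPD w P ∧ readWord P = (List.ofFn x).reverse} =
      cellsOf x '' {γ : Fin d → Fin n | RowCompat x γ} :=
    Set.ext fun P => isPD_and_readWord_eq_iff hd hperm hred
  rw [himage, finsum_mem_image (injOn_cellsOf hx), ← Finset.coe_filter_univ,
    finsum_mem_coe_finset, compatPoly]
  exact Finset.sum_congr rfl fun γ hγ => by rw [wtFin_cellsOf hx (Finset.mem_filter.mp hγ).2]

theorem finsum_isQPD_readWord_eq_compatPoly (hd : ∀ i : ℕ, n ≤ i + 1 → w i < w (i + 1))
    (hperm : wordPerm (List.ofFn x).reverse = w) (hred : IsReducedWord (List.ofFn x).reverse) :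
    ∑ᶠ Q ∈ {Q | IsQPD w Q ∧ readWord Q = (List.ofFn x).reverse}, slideF (wtFin n Q) =
      compatPoly n x fun i => toDual (x i) := by
  have hx : ∀ i k : Fin d, (i : ℕ) + 1 = k → x i ≠ x k := fun _ _ => hred.ne_of_adjacent
  have himage : {Q | IsQPD w Q ∧ readWord Q = (List.ofFn x).reverse} =
      cellsOf x '' {γ : Fin d → Fin n | IsGreatest {γ | RowCompat x γ} γ} :=
    Set.ext fun Q => isQPD_and_readWord_eq_iff hd hperm hred
  rw [himage, finsum_mem_image ((injOn_cellsOf hx).mono fun γ hγ => hγ.1),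
    ← Finset.coe_filter_univ, finsum_mem_coe_finset,
    ← linearCombination_compatTerm fun i k h => toDual_le_toDual.mp h, compatTerm, map_sum]
  refine Finset.sum_congr rfl fun γ hγ => ?_
  rw [wtFin_cellsOf hx (Finset.mem_filter.mp hγ).2.1, Finsupp.linearCombination_single, one_smul]

theorem schubertPoly_eq_finsum_slideF (hw : ∃ N, ∀ i, N ≤ i → w i = i)
    (hd : ∀ i : ℕ, n ≤ i + 1 → w i < w (i + 1)) :
    SchubertPoly n w = ∑ᶠ Q ∈ {Q | IsQPD w Q}, slideF (wtFin n Q) := by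
  rw [SchubertPoly, finsum_mem_eq_finsum_fiber (finite_setOf_isPD hw) readWord,
    finsum_mem_eq_finsum_fiber (finite_setOf_isQPD hw) readWord]
  refine finsum_congr fun l => ?_
  obtain ⟨d, x, rfl⟩ : ∃ d, ∃ x : Fin d → ℕ, l = (List.ofFn x).reverse :=
    ⟨_, l.reverse.get, by rw [List.ofFn_get, List.reverse_reverse]⟩
  by_cases h : wordPerm (List.ofFn x).reverse = w ∧ IsReducedWord (List.ofFn x).reverse
  · exact (finsum_isPD_readWord_eq_compatPoly hd h.1 h.2).trans
      (finsum_isQPD_readWord_eq_compatPoly hd h.1 h.2).symm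
  · have hPD : {P | IsPD w P ∧ readWord P = (List.ofFn x).reverse} = ∅ :=
      Set.eq_empty_of_forall_notMem fun P ⟨hP, hword⟩ => h (hword ▸ hP)
    have hQPD : {Q | IsQPD w Q ∧ readWord Q = (List.ofFn x).reverse} = ∅ :=
      Set.eq_empty_of_forall_notMem fun Q ⟨hQ, hword⟩ => h (hword ▸ hQ.1)
    exact (hPD ▸ finsum_mem_empty).trans (hQPD ▸ finsum_mem_empty).symm

end Schubert

/-! ### Comparison of coefficients -/

theorem finsum_smul_eq_linearCombination {ι R M : Type*} [Semiring R] [AddCommMonoid M] [Module R M]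
    (v : ι → M) {c : ι → R} (hc : {a | c a ≠ 0}.Finite) :
    ∑ᶠ a, c a • v a = Finsupp.linearCombination R v (Finsupp.ofSupportFinite c hc) := by
  rw [Finsupp.linearCombination_apply, Finsupp.sum]
  exact finsum_eq_sum_of_support_subset _ fun a ha =>
    Finset.mem_coe.mpr (Finsupp.mem_support_iff.mpr (left_ne_zero_of_smul ha))

theorem eq_of_finsum_smul_eq_linearCombination {ι R M : Type*} [Semiring R] [AddCommMonoid M]
    [Module R M] {v : ι → M} (hv : LinearIndependent R v) {c : ι → R} (hc : {a | c a ≠ 0}.Finite)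
    {φ : ι →₀ R} (h : ∑ᶠ a, c a • v a = Finsupp.linearCombination R v φ) : c = φ :=
  congrArg DFunLike.coe (hv ((finsum_smul_eq_linearCombination v hc).symm.trans h))

/-- the coefficients of the fundamental slide expansion of a product of
Schubert polynomials are `c_{u,v}^a = Σ_{(P,Q) ∈ QPD(u) × QPD(v)} [a ∣ wt(P) ⧢ wt(Q)]`. -/
theorem schubert_LR_rule (n : ℕ) (u v : Equiv.Perm ℕ)
    (hu : ∃ N, ∀ i, N ≤ i → u i = i) (hv : ∃ N, ∀ i, N ≤ i → v i = i)
    (hdu : ∀ i : ℕ, n ≤ i + 1 → u i < u (i + 1))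
    (hdv : ∀ i : ℕ, n ≤ i + 1 → v i < v (i + 1))
    (c : (Fin n → ℕ) → ℤ) (hc : {a | c a ≠ 0}.Finite)
    (hexp : SchubertPoly n u * SchubertPoly n v = ∑ᶠ a : Fin n → ℕ, c a • slideF a) :
    ∀ a : Fin n → ℕ,
      c a = ∑ᶠ P ∈ {P : Finset (ℕ × ℕ) | IsQPD u P},
        ∑ᶠ Q ∈ {Q : Finset (ℕ × ℕ) | IsQPD v Q},
          (slideMult (wtFin n P) (wtFin n Q) a : ℤ) := by
  intro a
  let S := (finite_setOf_isQPD hu).toFinset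
  let T := (finite_setOf_isQPD hv).toFinset
  have hcoeff : c = ⇑(∑ P ∈ S, ∑ Q ∈ T, slideProd (wtFin n P) (wtFin n Q)) := by
    refine eq_of_finsum_smul_eq_linearCombination linearIndependent_slideF hc ?_
    rw [← hexp, schubertPoly_eq_finsum_slideF hu hdu, schubertPoly_eq_finsum_slideF hv hdv,
      finsum_mem_eq_finite_toFinset_sum _ (finite_setOf_isQPD hu),
      finsum_mem_eq_finite_toFinset_sum _ (finite_setOf_isQPD hv), Finset.sum_mul_sum]
    simp only [map_sum, linearCombination_slideProd, S, T]
  rw [hcoeff, finsum_mem_eq_finite_toFinset_sum _ (finite_setOf_isQPD hu)]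
  simp only [finsum_mem_eq_finite_toFinset_sum _ (finite_setOf_isQPD hv),
    Finsupp.finsetSum_apply, slideProd_apply, S, T]

end SlidePaper
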